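/- Let w = Σ_{l=0}^{3} w^l be a graded form on ℝ³ with components in H¹_loc and let φ = Σ_{l=0}^{3} φ^l be a graded form with smooth compactly supported components. Then ∫⟨P(γ,μ,ω)^t w, P(γ,μ,ω)^t φ⟩dx = ∫[⟨δw, δφ⟩ + ⟨dw, dφ⟩ − ω²ε₀μ₀⟨w, φ⟩]dx + ⟨Q(γ,μ,ω)w, φ⟩, where P(γ,μ,ω)^t w is computed almost everywhere from the weak derivatives of w and dw, δw act degreewise. -/

import Mathlib

noncomputable section

open MeasureTheory Finset

namespace EMPaper

abbrev Pt (n : ℕ) := Fin n → ℝ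
abbrev GF (n : ℕ) := Finset (Fin n) → ℂ
abbrev Form (n : ℕ) := Pt n → GF n

variable {n : ℕ}

def msgn (I J : Finset (Fin n)) : ℂ :=
  (-1 : ℂ) ^ (((I ×ˢ J).filter fun p => p.2 < p.1).card)

def wedge (u v : GF n) : GF n := fun S =>
  ∑ I ∈ S.powerset, msgn I (S \ I) * u I * v (S \ I)

def vee (v u : GF n) : GF n := fun I =>
  ∑ J ∈ (univ \ I).powerset, msgn I J * v J * u (I ∪ J)

def ginner (u v : GF n) : ℂ := ∑ S : Finset (Fin n), u S * v S

def gconj (u : GF n) : GF n := fun S => (starRingEnd ℂ) (u S)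

def proj (l : ℕ) (u : GF n) : GF n := fun S => if S.card = l then u S else 0

def IsGrade (l : ℕ) (u : GF n) : Prop := ∀ S : Finset (Fin n), S.card ≠ l → u S = 0

def dxe (j : Fin n) : GF n := fun S => if S = {j} then 1 else 0

def oneG (c : Fin n → ℂ) : GF n := fun S => ∑ j, if S = {j} then c j else 0

def altSign (u : GF n) : GF n := fun S => (-1 : ℂ) ^ S.card * u S

def gd (D : Fin n → GF n) : GF n := fun S => ∑ j, wedge (dxe j) (D j) S

def gdel (D : Fin n → GF n) : GF n := fun S =>
  (-1 : ℂ) ^ (S.card + 1) * ∑ j, vee (dxe j) (D j) S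

def pd (j : Fin n) (f : Pt n → ℂ) : Pt n → ℂ := fun x => fderiv ℝ f x (Pi.single j 1)

def Dcl (φ : Form n) : Fin n → Form n := fun j x S => pd j (fun y => φ y S) x

def IsTest (φ : Pt n → ℂ) : Prop := ContDiff ℝ (⊤ : ℕ∞) φ ∧ HasCompactSupport φ

def TestForm (φ : Form n) : Prop := ∀ S : Finset (Fin n), IsTest fun x => φ x S

def L2loc (f : Pt n → ℂ) : Prop :=
  AEStronglyMeasurable f (volume : Measure (Pt n)) ∧
    ∀ K : Set (Pt n), IsCompact K → IntegrableOn (fun x => ‖f x‖ ^ 2) K volume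

def HasWeakPD (j : Fin n) (f g : Pt n → ℂ) : Prop :=
  ∀ φ : Pt n → ℂ, IsTest φ → ∫ x, g x * φ x = -∫ x, f x * pd j φ x

def H1locWith (w : Form n) (Dw : Fin n → Form n) : Prop :=
  (∀ S : Finset (Fin n), L2loc fun x => w x S) ∧
    (∀ (j : Fin n) (S : Finset (Fin n)),
      HasWeakPD j (fun x => w x S) fun x => Dw j x S) ∧
    ∀ (j : Fin n) (S : Finset (Fin n)), L2loc fun x => Dw j x S

/-! The three-dimensional electromagnetic setting. -/

/-- The data of the medium: frequency `ω`, constants `ε₀, μ₀` and `C¹` coefficients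
`ε, σ, μ` with `ε ≥ ε₀ > 0`, `μ ≥ μ₀ > 0`, `σ ≥ 0`. -/
structure Coeffs where
  ω : ℝ
  ε₀ : ℝ
  μ₀ : ℝ
  εf : Pt 3 → ℝ
  σf : Pt 3 → ℝ
  μf : Pt 3 → ℝ
  hω : 0 < ω
  hε₀ : 0 < ε₀
  hμ₀ : 0 < μ₀
  hεC1 : ContDiff ℝ 1 εf
  hσC1 : ContDiff ℝ 1 σf
  hμC1 : ContDiff ℝ 1 μf
  hεge : ∀ x, ε₀ ≤ εf x
  hμge : ∀ x, μ₀ ≤ μf x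
  hσge : ∀ x, 0 ≤ σf x

namespace Coeffs

variable (C : Coeffs)

/-- `γ = ε + iσ/ω`. -/
def γ : Pt 3 → ℂ := fun x => (C.εf x : ℂ) + Complex.I * (C.σf x : ℂ) / (C.ω : ℂ)

/-- `a = (1/2) Log γ`. -/
def a : Pt 3 → ℂ := fun x => (1 / 2 : ℂ) * Complex.log (C.γ x)

/-- `b = (1/2) Log μ`. -/
def b : Pt 3 → ℂ := fun x => (1 / 2 : ℂ) * Complex.log ((C.μf x : ℂ))

/-- `γ^{1/2} = e^a`. -/
def sg : Pt 3 → ℂ := fun x => Complex.exp (C.a x)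

/-- `μ^{1/2} = e^b`. -/
def sm : Pt 3 → ℂ := fun x => Complex.exp (C.b x)

/-- The one-form `da`. -/
def da : Form 3 := fun x => oneG fun j => pd j C.a x

/-- The one-form `db`. -/
def db : Form 3 := fun x => oneG fun j => pd j C.b x

/-- The one-form `d(γ^{1/2} μ^{1/2})`. -/
def dsgm : Form 3 := fun x => oneG fun j => pd j (fun y => C.sg y * C.sm y) x

/-- The zeroth order coefficient `iω γ^{1/2} μ^{1/2}`. -/
def c0 : Pt 3 → ℂ := fun x => Complex.I * (C.ω : ℂ) * C.sg x * C.sm x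

end Coeffs

/-- The zeroth order part of `P(γ,μ,ω)` at a point, given the values `A = da`, `B = db`
and `c = iωγ^{1/2}μ^{1/2}` there:
`da∧v¹ + da∨(v¹+v³) + db∧(v⁰+v²) − db∨v² + iωγ^{1/2}μ^{1/2} v`. -/
def P0 (A B : GF 3) (c : ℂ) (v : GF 3) : GF 3 :=
  wedge A (proj 1 v) + vee A (proj 1 v + proj 3 v) + wedge B (proj 0 v + proj 2 v)
    - vee B (proj 2 v) + c • v

/-- The zeroth order part of `P(γ,μ,ω)^t` at a point:
`db∧v¹ + db∨(v¹+v³) + da∧(v⁰+v²) − da∨v² + iωγ^{1/2}μ^{1/2} v`. -/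
def P0t (A B : GF 3) (c : ℂ) (v : GF 3) : GF 3 :=
  wedge B (proj 1 v) + vee B (proj 1 v + proj 3 v) + wedge A (proj 0 v + proj 2 v)
    - vee A (proj 2 v) + c • v

/-- `P(γ,μ,ω)v` at a point, computed from the partial derivatives `D j = ∂_j v`. -/
def Pfull (A B : GF 3) (c : ℂ) (D : Fin 3 → GF 3) (v : GF 3) : GF 3 :=
  (gd fun j => altSign (D j)) + (gdel fun j => altSign (D j)) + P0 A B c v

/-- `P(γ,μ,ω)^t v` at a point, computed from the partial derivatives `D j = ∂_j v`. -/
def Ptfull (A B : GF 3) (c : ℂ) (D : Fin 3 → GF 3) (v : GF 3) : GF 3 :=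
  -((gd fun j => altSign (D j)) + (gdel fun j => altSign (D j))) + P0t A B c v

/-- `v` is a weak solution of `P(γ,μ,ω)v = 0` on `ℝ³`. -/
def IsWeakSolP (C : Coeffs) (v : Form 3) : Prop :=
  ∀ φ : Form 3, TestForm φ →
    (∫ x, ginner (altSign (v x))
        ((gd fun j => Dcl φ j x) + gdel fun j => Dcl φ j x))
      + (∫ x, ginner (P0 (C.da x) (C.db x) (C.c0 x) (v x)) (φ x)) = 0

/-- `v` is a weak solution of `P(γ,μ,ω)^t v = 0` on `ℝ³`. -/
def IsWeakSolPt (C : Coeffs) (v : Form 3) : Prop :=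
  ∀ φ : Form 3, TestForm φ →
    (∫ x, ginner (-altSign (v x))
        ((gd fun j => Dcl φ j x) + gdel fun j => Dcl φ j x))
      + (∫ x, ginner (P0t (C.da x) (C.db x) (C.c0 x) (v x)) (φ x)) = 0

/-- The components of the Hodge star of the 2-form part: `∗(dx²∧dx³) = dx¹`,
`∗(dx³∧dx¹) = dx²`, `∗(dx¹∧dx²) = dx³`. -/
def star2 (u : GF 3) : Fin 3 → ℂ := fun k =>
  if k = 0 then u {1, 2} else if k = 1 then -u {0, 2} else u {0, 1}

/-- `⟨c, D*(u⊙v)⟩` for 1-forms with components `u, v` and partial derivatives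
`du j k = ∂_j u_k`, `dv j k = ∂_j v_k`, where
`D*(u⊙v) = −Σ_k (Σ_j ∂_j(u_j v_k + u_k v_j)) dx^k`. -/
def dstarPair (c u v : Fin 3 → ℂ) (du dv : Fin 3 → Fin 3 → ℂ) : ℂ :=
  ∑ k, c k * (-(∑ j, (du j j * v k + u j * dv j k + du j k * v j + u k * dv j j)))

/-- The pairing `⟨Q(γ,μ,ω)w, φ⟩`, where `Dw` is the family of weak partial derivatives
of `w` and `φ` is a smooth compactly supported graded form.  The weak derivatives of the
scalar products and of the symmetric tensor products appearing in `Q` are expanded by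
the Leibniz rule. -/
def Qpair (C : Coeffs) (w : Form 3) (Dw : Fin 3 → Form 3) (φ : Form 3) : ℂ :=
  -(∫ x, (C.ω : ℂ) ^ 2 * (C.γ x * (C.μf x : ℂ) - ((C.ε₀ * C.μ₀ : ℝ) : ℂ))
      * ginner (w x) (φ x))
  + (∫ x, ginner ((2 * Complex.I * (C.ω : ℂ)) •
      (vee (C.dsgm x) (proj 1 (w x) + proj 3 (w x))
        + wedge (C.dsgm x) (proj 0 (w x) + proj 2 (w x)))) (φ x))
  + (∫ x, ginner (C.da x) (C.da x)
        * ginner (proj 0 (w x) + proj 2 (w x)) (proj 0 (φ x) + proj 2 (φ x))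
      + ginner (C.db x) (C.db x)
        * ginner (proj 1 (w x) + proj 3 (w x)) (proj 1 (φ x) + proj 3 (φ x)))
  + (∫ x,
      (∑ j, pd j C.a x *
        (ginner (proj 2 (Dw j x) - proj 0 (Dw j x)) (proj 0 (φ x) + proj 2 (φ x))
          + ginner (proj 2 (w x) - proj 0 (w x)) (proj 0 (Dcl φ j x) + proj 2 (Dcl φ j x))))
      + ∑ j, pd j C.b x *
        (ginner (proj 1 (Dw j x) - proj 3 (Dw j x)) (proj 1 (φ x) + proj 3 (φ x))
          + ginner (proj 1 (w x) - proj 3 (w x)) (proj 1 (Dcl φ j x) + proj 3 (Dcl φ j x))))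
  + (∫ x, dstarPair (fun k => pd k C.b x) (fun j => w x {j}) (fun j => φ x {j})
      (fun j k => Dw j x {k}) (fun j k => Dcl φ j x {k}))
  + (∫ x, dstarPair (fun k => pd k C.a x) (star2 (w x)) (star2 (φ x))
      (fun j k => star2 (Dw j x) k) (fun j k => star2 (Dcl φ j x) k))

/-- The pairing `⟨Q̃(γ,μ,ω)w, φ⟩`. -/
def Qtpair (C : Coeffs) (w : Form 3) (Dw : Fin 3 → Form 3) (φ : Form 3) : ℂ :=
  -(∫ x, (C.ω : ℂ) ^ 2 * (C.γ x * (C.μf x : ℂ) - ((C.ε₀ * C.μ₀ : ℝ) : ℂ))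
      * ginner (w x) (φ x))
  + (∫ x, ginner ((-(2 * Complex.I * (C.ω : ℂ))) • vee (C.dsgm x) (proj 2 (w x))
      + (2 * Complex.I * (C.ω : ℂ)) • wedge (C.dsgm x) (proj 1 (w x))) (φ x))
  + (∫ x, ginner (C.db x) (C.db x)
        * ginner (proj 0 (w x) + proj 2 (w x)) (proj 0 (φ x) + proj 2 (φ x))
      + ginner (C.da x) (C.da x)
        * ginner (proj 1 (w x) + proj 3 (w x)) (proj 1 (φ x) + proj 3 (φ x)))
  + (∫ x,
      (∑ j, pd j C.b x *
        (ginner (proj 0 (Dw j x) - proj 2 (Dw j x)) (proj 0 (φ x) + proj 2 (φ x))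
          + ginner (proj 0 (w x) - proj 2 (w x)) (proj 0 (Dcl φ j x) + proj 2 (Dcl φ j x))))
      + ∑ j, pd j C.a x *
        (ginner (proj 3 (Dw j x) - proj 1 (Dw j x)) (proj 1 (φ x) + proj 3 (φ x))
          + ginner (proj 3 (w x) - proj 1 (w x)) (proj 1 (Dcl φ j x) + proj 3 (Dcl φ j x))))
  - (∫ x, dstarPair (fun k => pd k C.a x) (fun j => w x {j}) (fun j => φ x {j})
      (fun j k => Dw j x {k}) (fun j k => Dcl φ j x {k}))
  - (∫ x, dstarPair (fun k => pd k C.b x) (star2 (w x)) (star2 (φ x))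
      (fun j k => star2 (Dw j x) k) (fun j k => star2 (Dcl φ j x) k))

/-- The pairing `⟨q̃(γ,μ,ω)(v⁰+v³), φ⟩` for `φ = φ⁰ + φ³`, where `Dv` is the family of
weak partial derivatives of `v`. -/
def qtPair (C : Coeffs) (v : Form 3) (Dv : Fin 3 → Form 3) (φ : Form 3) : ℂ :=
  -(∫ x, (C.ω : ℂ) ^ 2 * (C.γ x * (C.μf x : ℂ) - ((C.ε₀ * C.μ₀ : ℝ) : ℂ))
      * ginner (proj 0 (v x) + proj 3 (v x)) (φ x))
  + ∫ x, ginner (C.db x) (C.db x) * (v x ∅ * φ x ∅)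
      + ginner (C.da x) (C.da x) * (v x univ * φ x univ)
      + (∑ j, pd j C.b x * (Dv j x ∅ * φ x ∅ + v x ∅ * Dcl φ j x ∅))
      + ∑ j, pd j C.a x * (Dv j x univ * φ x univ + v x univ * Dcl φ j x univ)

/-!
Let `D = d + δ`, let `J` be the sign `(-1)^l` on `l`-forms, and let `M` be the algebraic part of
`P^t` coming from `da` and `db`. Then `P^t = -D J + M + c` with `c = iω γ^{1/2} μ^{1/2}`, and
`⟨P^t w, P^t φ⟩` is expanded term by term.

* `⟨D J w, D J φ⟩ = ⟨D w, D φ⟩`, and `d² = δ² = 0` kills the mixed terms `⟨dw, δφ⟩`, `⟨δw, dφ⟩`.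
* `⟨M w, M φ⟩` is `⟨da, da⟩` on even degrees plus `⟨db, db⟩` on odd degrees, and `c² = -ω² γ μ`.
* The cross terms of `D J` and `M` agree pointwise with the first order terms of `Q`, up to coexact
  forms paired with `da` and `db`. These integrate to zero because exact and coexact forms are
  orthogonal; as `a` and `b` are only `C¹`, this needs an approximation by smooth functions.
* The cross terms with `c` are a total derivative plus terms without derivatives of `w` and `φ`.
  Since `dc = c (da + db)`, the latter combine to the `2 dc` terms of `Q`.
-/

/-! ### Algebra of graded forms -/

lemma ginner_comm (u v : GF n) : ginner u v = ginner v u :=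
  sum_congr rfl fun _ _ => mul_comm _ _

lemma ginner_add_left (u v w : GF n) : ginner (u + v) w = ginner u w + ginner v w := by
  simp only [ginner, Pi.add_apply, add_mul, sum_add_distrib]

lemma ginner_add_right (u v w : GF n) : ginner u (v + w) = ginner u v + ginner u w := by
  simp only [ginner, Pi.add_apply, mul_add, sum_add_distrib]

lemma ginner_zero_right (u : GF n) : ginner u 0 = 0 := by
  simp only [ginner, Pi.zero_apply, mul_zero, sum_const_zero]

lemma ginner_neg_left (u v : GF n) : ginner (-u) v = -ginner u v := by
  simp only [ginner, Pi.neg_apply, neg_mul, sum_neg_distrib]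

lemma ginner_smul_left (u v : GF n) (c : ℂ) : ginner (c • u) v = c * ginner u v := by
  simp only [ginner, Pi.smul_apply, smul_eq_mul, mul_sum, mul_assoc]

lemma ginner_smul_right (u v : GF n) (c : ℂ) : ginner u (c • v) = c * ginner u v := by
  rw [ginner_comm, ginner_smul_left, ginner_comm]

lemma msgn_singleton_left (j : Fin n) (S : Finset (Fin n)) :
    msgn {j} S = (-1) ^ (S.filter (· < j)).card := by
  rw [msgn, singleton_product, filter_map, card_map]
  rfl

lemma msgn_singleton_right (j : Fin n) (S : Finset (Fin n)) :
    msgn S {j} = (-1) ^ (S.filter (j < ·)).card := by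
  rw [msgn, product_singleton, filter_map, card_map]
  rfl

lemma msgn_singleton_erase (j : Fin n) (S : Finset (Fin n)) :
    msgn {j} (S.erase j) = msgn {j} S := by
  simp [msgn_singleton_left, filter_erase]

lemma msgn_singleton_insert_self (j : Fin n) (S : Finset (Fin n)) :
    msgn {j} (insert j S) = msgn {j} S := by
  simp [msgn_singleton_left, filter_insert]

lemma msgn_singleton_insert {i j : Fin n} {S : Finset (Fin n)} (hi : i ∉ S) :
    msgn {j} (insert i S) = (if i < j then -1 else 1) * msgn {j} S := by
  rw [msgn_singleton_left, msgn_singleton_left, filter_insert]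
  split_ifs with h
  · rw [card_insert_of_notMem (by simp [hi]), pow_succ']
  · rw [one_mul]

lemma msgn_singleton_right_eq {j : Fin n} {S : Finset (Fin n)} (hj : j ∉ S) :
    msgn S {j} = (-1) ^ S.card * msgn {j} S := by
  have hcard : S.card = (S.filter (· < j)).card + (S.filter (j < ·)).card := by
    rw [← card_filter_add_card_filter_not (s := S) (· < j)]
    congr 2
    refine filter_congr fun i hi => ?_
    rw [not_lt, le_iff_lt_or_eq, or_iff_left (ne_of_mem_of_not_mem hi hj).symm]
  rw [msgn_singleton_left, msgn_singleton_right, hcard, pow_add, mul_right_comm,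
    ← mul_pow, neg_one_mul, neg_neg, one_pow, one_mul]

lemma wedge_oneG_apply (c : Fin n → ℂ) (v : GF n) (S : Finset (Fin n)) :
    wedge (oneG c) v S = ∑ j ∈ S, msgn {j} S * (c j * v (S.erase j)) := by
  simp only [wedge, oneG, mul_sum, sum_mul, mul_ite, ite_mul, mul_zero, zero_mul]
  rw [sum_comm]
  simp [sdiff_singleton_eq_erase, msgn_singleton_erase, mul_assoc, sum_ite_mem]

lemma vee_oneG_apply (c : Fin n → ℂ) (v : GF n) (S : Finset (Fin n)) :
    vee (oneG c) v S = ∑ j ∈ Sᶜ, msgn S {j} * (c j * v (insert j S)) := by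
  simp only [vee, oneG, mul_sum, sum_mul, mul_ite, ite_mul, mul_zero, zero_mul]
  rw [sum_comm]
  simp only [sum_ite_eq', mem_powerset, singleton_subset_iff, ← compl_eq_univ_sdiff,
    sum_ite_mem, univ_inter, mul_assoc, union_comm S, ← insert_eq]

lemma dxe_eq_oneG (j : Fin n) : dxe j = oneG (Pi.single j 1) := by
  funext S
  simp only [dxe, oneG, Pi.single_apply]
  rw [sum_eq_single j (by simp +contextual) (by simp), if_pos rfl]

lemma gd_apply (D : Fin n → GF n) (S : Finset (Fin n)) :
    gd D S = ∑ j ∈ S, msgn {j} S * D j (S.erase j) := by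
  simp only [gd, dxe_eq_oneG, wedge_oneG_apply, Pi.single_apply, ite_mul, one_mul, zero_mul,
    mul_ite, mul_zero, sum_ite_eq', sum_ite_mem, univ_inter]

lemma gdel_apply (D : Fin n → GF n) (S : Finset (Fin n)) :
    gdel D S = -∑ j ∈ Sᶜ, msgn {j} S * D j (insert j S) := by
  simp only [gdel, dxe_eq_oneG, vee_oneG_apply, Pi.single_apply, ite_mul, one_mul, zero_mul,
    mul_ite, mul_zero, sum_ite_eq', sum_ite_mem, univ_inter, mul_sum, ← sum_neg_distrib]
  refine sum_congr rfl fun j hj => ?_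
  rw [msgn_singleton_right_eq (mem_compl.1 hj), pow_succ]
  linear_combination (-msgn {j} S * D j (insert j S)) *
    pow_mul_pow_eq_one S.card (show (-1 : ℂ) * -1 = 1 by norm_num)

lemma sum_mem_eq_sum_notMem_insert {M : Type*} [AddCommMonoid M] (j : Fin n)
    (f : Finset (Fin n) → M) :
    ∑ S with j ∈ S, f S = ∑ S with j ∉ S, f (insert j S) := by
  refine sum_nbij' (erase · j) (insert j) ?_ ?_ ?_ ?_ ?_ <;> simp +contextual [insert_erase]

lemma ginner_gd (D : Fin n → GF n) (v : GF n) :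
    ginner (gd D) v = ∑ j, ∑ S with j ∉ S, msgn {j} S * (D j S * v (insert j S)) := by
  have hflip : ginner (gd D) v
      = ∑ j, ∑ S with j ∈ S, msgn {j} S * D j (S.erase j) * v S := by
    simp only [ginner, gd_apply, sum_mul, sum_filter]
    rw [sum_comm]
    simp only [sum_ite_mem, univ_inter]
  rw [hflip]
  refine sum_congr rfl fun j _ => ?_
  rw [sum_mem_eq_sum_notMem_insert]
  refine sum_congr rfl fun S hS => ?_
  rw [msgn_singleton_insert_self, erase_insert (mem_filter.1 hS).2, mul_assoc]

lemma ginner_gdel (D : Fin n → GF n) (u : GF n) :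
    ginner u (gdel D) = -∑ j, ∑ S with j ∉ S, msgn {j} S * (u S * D j (insert j S)) := by
  simp only [ginner, gdel_apply, mul_neg, sum_neg_distrib, mul_sum, sum_filter]
  rw [sum_comm]
  simp only [← mem_compl, sum_ite_mem, univ_inter, mul_left_comm]

lemma sum_sum_erase_eq_zero {ι M : Type*} [DecidableEq ι] [AddCommGroup M]
    [IsAddTorsionFree M] (s : Finset ι) (f : ι → ι → M)
    (hf : ∀ i ∈ s, ∀ j ∈ s, i ≠ j → f i j = -f j i) :
    ∑ i ∈ s, ∑ j ∈ s.erase i, f i j = 0 := by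
  refine self_eq_neg.1 ?_
  rw [← sum_neg_distrib, sum_comm' (t' := s) (s' := fun j => s.erase j) (by grind)]
  refine sum_congr rfl fun j hj => ?_
  rw [← sum_neg_distrib]
  exact sum_congr rfl fun i hi => hf i (mem_of_mem_erase hi) j hj (ne_of_mem_erase hi)

lemma msgn_mul_msgn_insert {i j : Fin n} {S : Finset (Fin n)} (hij : i ≠ j) (hi : i ∉ S)
    (hj : j ∉ S) :
    msgn {i} S * msgn {j} (insert i S) = -(msgn {j} S * msgn {i} (insert j S)) := by
  rw [msgn_singleton_insert hi, msgn_singleton_insert hj]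
  rcases hij.lt_or_gt with h | h <;> simp [h, h.not_gt, mul_comm]

lemma gd_gd {H : Fin n → Fin n → GF n} (hH : ∀ i j, H i j = H j i) :
    gd (fun i => gd (H i)) = 0 := by
  funext S
  simp only [gd_apply, mul_sum, Pi.zero_apply]
  refine sum_sum_erase_eq_zero S _ fun i hi j hj hij => ?_
  have hsign := msgn_mul_msgn_insert hij
    (S := (S.erase i).erase j) (by simp) (by simp)
  rw [insert_erase (by grind), msgn_singleton_erase, erase_right_comm,
    insert_erase (by grind), msgn_singleton_erase, msgn_singleton_erase,
    msgn_singleton_erase i] at hsign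
  rw [hH i j, erase_right_comm]
  linear_combination H j i ((S.erase j).erase i) * hsign

lemma gdel_gdel {H : Fin n → Fin n → GF n} (hH : ∀ i j, H i j = H j i) :
    gdel (fun i => gdel (H i)) = 0 := by
  funext S
  simp only [gdel_apply, mul_neg, sum_neg_distrib, neg_neg, mul_sum, compl_insert,
    Pi.zero_apply]
  refine sum_sum_erase_eq_zero Sᶜ _ fun i hi j hj hij => ?_
  rw [hH i j, insert_comm i j]
  linear_combination H j i (insert j (insert i S)) *
    msgn_mul_msgn_insert hij (mem_compl.1 hi) (mem_compl.1 hj)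

lemma ginner_altSign_left (u v : GF n) : ginner (altSign u) v = ginner u (altSign v) :=
  sum_congr rfl fun S _ => by simp only [altSign]; ring

lemma altSign_altSign (u : GF n) : altSign (altSign u) = u := by
  funext S
  rw [altSign, altSign, ← mul_assoc, pow_mul_pow_eq_one _ (by norm_num), one_mul]

lemma gd_altSign (D : Fin n → GF n) : (gd fun j => altSign (D j)) = -altSign (gd D) := by
  funext S
  simp only [gd_apply, altSign, Pi.neg_apply, mul_sum, ← sum_neg_distrib]
  refine sum_congr rfl fun j hj => ?_
  rw [← card_erase_add_one hj, pow_succ]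
  ring

lemma gdel_altSign (D : Fin n → GF n) : (gdel fun j => altSign (D j)) = -altSign (gdel D) := by
  funext S
  simp only [gdel_apply, altSign, Pi.neg_apply, mul_neg, mul_sum, neg_neg, ← sum_neg_distrib]
  refine sum_congr rfl fun j hj => ?_
  rw [card_insert_of_notMem (mem_compl.1 hj), pow_succ]
  ring

/-- The Hodge–Dirac operator `d + δ`, acting on the partial derivatives `D j = ∂_j u` of a
graded form at a point. -/
def dirac (D : Fin n → GF n) : GF n := gd D + gdel D

lemma altSign_neg (u : GF n) : altSign (-u) = -altSign u := by
  funext S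
  simp [altSign]

lemma altSign_add (u v : GF n) : altSign (u + v) = altSign u + altSign v := by
  funext S
  simp [altSign, mul_add]

lemma dirac_altSign (D : Fin n → GF n) :
    (dirac fun j => altSign (D j)) = -altSign (dirac D) := by
  rw [dirac, gd_altSign, gdel_altSign, dirac, altSign_add, neg_add]

lemma ginner_dirac_altSign (D E : Fin n → GF n) :
    ginner (dirac fun j => altSign (D j)) (dirac fun j => altSign (E j))
      = ginner (dirac D) (dirac E) := by
  rw [dirac_altSign, dirac_altSign, ← altSign_neg, ginner_altSign_left, altSign_neg,
    altSign_altSign]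
  simp only [ginner, Pi.neg_apply, neg_mul_neg]

lemma wedge_smul_right (u v : GF n) (c : ℂ) : wedge u (c • v) = c • wedge u v := by
  funext S
  simp only [wedge, Pi.smul_apply, smul_eq_mul, mul_sum, mul_left_comm c]

lemma wedge_smul_left (u v : GF n) (c : ℂ) : wedge (c • u) v = c • wedge u v := by
  funext S
  simp only [wedge, Pi.smul_apply, smul_eq_mul, mul_sum]
  exact sum_congr rfl fun _ _ => by ring

lemma vee_smul_right (v u : GF n) (c : ℂ) : vee v (c • u) = c • vee v u := by
  funext S
  simp only [vee, Pi.smul_apply, smul_eq_mul, mul_sum, mul_left_comm c]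

lemma vee_smul_left (v u : GF n) (c : ℂ) : vee (c • v) u = c • vee v u := by
  funext S
  simp only [vee, Pi.smul_apply, smul_eq_mul, mul_sum]
  exact sum_congr rfl fun _ _ => by ring

lemma proj_smul (l : ℕ) (u : GF n) (c : ℂ) : proj l (c • u) = c • proj l u := by
  funext S
  simp [proj]

lemma altSign_smul (u : GF n) (c : ℂ) : altSign (c • u) = c • altSign u := by
  funext S
  simp only [altSign, Pi.smul_apply, smul_eq_mul, mul_left_comm c]

lemma gd_smul (D : Fin n → GF n) (c : ℂ) : (gd fun j => c • D j) = c • gd D := by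
  funext S
  simp only [gd, wedge_smul_right, Pi.smul_apply, smul_sum]

lemma gdel_smul (D : Fin n → GF n) (c : ℂ) : (gdel fun j => c • D j) = c • gdel D := by
  funext S
  simp only [gdel_apply, Pi.smul_apply, smul_eq_mul, mul_neg, mul_sum, mul_left_comm c]

lemma dirac_smul (D : Fin n → GF n) (c : ℂ) : (dirac fun j => c • D j) = c • dirac D := by
  simp only [dirac, gd_smul, gdel_smul, smul_add]

lemma dirac_add (D E : Fin n → GF n) : (dirac fun j => D j + E j) = dirac D + dirac E := by
  funext S
  simp only [dirac, Pi.add_apply, gd_apply, gdel_apply, mul_add, sum_add_distrib]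
  ring

/-! ### Approximation of `C¹` functions by smooth functions -/

lemma pd_mul {f g : Pt n → ℂ} {x : Pt n} (hf : DifferentiableAt ℝ f x)
    (hg : DifferentiableAt ℝ g x) (j : Fin n) :
    pd j (fun y => f y * g y) x = f x * pd j g x + pd j f x * g x := by
  simp only [pd]
  rw [fderiv_fun_mul hf hg]
  simp [mul_comm]

lemma pd_sum_const_mul {ι : Type*} (s : Finset ι) (c : ι → ℂ) {f : ι → Pt n → ℂ} {x : Pt n}
    (hf : ∀ i, DifferentiableAt ℝ (f i) x) (j : Fin n) :
    pd j (fun y => ∑ i ∈ s, c i * f i y) x = ∑ i ∈ s, c i * pd j (f i) x := by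
  simp only [pd]
  rw [fderiv_fun_sum fun i _ => (hf i).const_mul (c i), _root_.sum_apply]
  exact sum_congr rfl fun i _ => by rw [fderiv_const_mul (hf i)]; rfl

lemma contDiff_pd {f : Pt n → ℂ} {k m : WithTop ℕ∞} (hf : ContDiff ℝ m f) (hkm : k + 1 ≤ m)
    (j : Fin n) : ContDiff ℝ k (pd j f) :=
  (hf.fderiv_right hkm).clm_apply contDiff_const

lemma continuous_pd {f : Pt n → ℂ} (hf : ContDiff ℝ 1 f) (j : Fin n) : Continuous (pd j f) :=
  (contDiff_pd (k := 0) hf (by simp) j).continuous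

lemma pd_comm {f : Pt n → ℂ} (hf : ContDiff ℝ 2 f) (i j : Fin n) (x : Pt n) :
    pd i (pd j f) x = pd j (pd i f) x := by
  have hpd : ∀ k l : Fin n, pd k (pd l f) x
      = fderiv ℝ (fderiv ℝ f) x (Pi.single k 1) (Pi.single l 1) := fun k l => by
    unfold pd
    rw [fderiv_clm_apply
      ((hf.fderiv_right (m := 1) (by norm_num)).differentiable (by norm_num) x)
      (differentiableAt_const _)]
    simp
  rw [hpd, hpd]
  exact (hf.contDiffAt.isSymmSndFDerivAt (by simp)).eq _ _

lemma hasCompactSupport_pd {f : Pt n → ℂ} (hf : HasCompactSupport f) (j : Fin n) :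
    HasCompactSupport (pd j f) :=
  (hf.fderiv (𝕜 := ℝ)).comp_left (g := fun L : Pt n →L[ℝ] ℂ => L (Pi.single j 1)) rfl

lemma IsTest.differentiable {f : Pt n → ℂ} (hf : IsTest f) : Differentiable ℝ f :=
  hf.1.differentiable (by simp)

lemma IsTest.pd {f : Pt n → ℂ} (hf : IsTest f) (j : Fin n) : IsTest (pd j f) :=
  ⟨contDiff_pd hf.1 (by simp) j, hasCompactSupport_pd hf.2 j⟩

lemma hasCompactSupport_sum_const_mul {ι : Type*} (s : Finset ι) (c : ι → ℂ)
    {f : ι → Pt n → ℂ} (hf : ∀ i, HasCompactSupport (f i)) :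
    HasCompactSupport fun x => ∑ i ∈ s, c i * f i x := by
  rw [show (fun x => ∑ i ∈ s, c i * f i x) = ∑ i ∈ s, (fun _ => c i) * f i by ext; simp]
  exact HasCompactSupport.finset_sum fun i _ => (hf i).mul_left

lemma IsTest.sum_const_mul {ι : Type*} (s : Finset ι) (c : ι → ℂ) {f : ι → Pt n → ℂ}
    (hf : ∀ i, IsTest (f i)) : IsTest fun x => ∑ i ∈ s, c i * f i x :=
  ⟨ContDiff.sum fun i _ => contDiff_const.mul (hf i).1,
    hasCompactSupport_sum_const_mul s c fun i => (hf i).2⟩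

lemma pd_convolution {g : Pt n → ℝ} (hg : LocallyIntegrable g) {f : Pt n → ℂ}
    (hf : ContDiff ℝ 1 f) (hc : HasCompactSupport f) (j : Fin n) (x : Pt n) :
    pd j (convolution g f (.lsmul ℝ ℝ) volume) x
      = convolution g (pd j f) (.lsmul ℝ ℝ) volume x := by
  unfold pd
  rw [(hc.hasFDerivAt_convolution_right _ hg hf x).fderiv, convolution_precompR_apply _ hg
    (hc.fderiv (𝕜 := ℝ)) (hf.continuous_fderiv (by norm_num))]

open Filter Topology in
lemma exists_contDiff_approx_of_hasCompactSupport {f : Pt n → ℂ} (hf : ContDiff ℝ 1 f)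
    (hc : HasCompactSupport f) {ε : ℝ} (hε : 0 < ε) :
    ∃ F : Pt n → ℂ, ContDiff ℝ (⊤ : ℕ∞) F ∧ (∀ x, ‖F x - f x‖ ≤ ε) ∧
      ∀ j x, ‖pd j F x - pd j f x‖ ≤ ε := by
  have hunif : ∀ g : Pt n → ℂ, Continuous g → HasCompactSupport g →
      ∀ᶠ r in 𝓝[>] (0 : ℝ), ∀ x y, dist y x < r → dist (g y) (g x) ≤ ε := fun g hg hgc => by
    obtain ⟨δ, hδ, h⟩ := Metric.uniformContinuous_iff.1
      (hgc.uniformContinuous_of_continuous hg) ε hε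
    filter_upwards [Ioo_mem_nhdsGT hδ] with r hr x y hyx
    exact (h (hyx.trans hr.2)).le
  obtain ⟨r, ⟨hr₀, hr⟩, hr_pd⟩ := ((eventually_mem_nhdsWithin.and
    (hunif f hf.continuous hc)).and (eventually_all.2 fun j =>
      hunif (pd j f) (continuous_pd hf j) (hasCompactSupport_pd hc j))).exists
  let ψ : ContDiffBump (0 : Pt n) := ⟨r / 2, r, half_pos hr₀, half_lt_self hr₀⟩
  refine ⟨convolution (ψ.normed volume) f (.lsmul ℝ ℝ) volume,
    ψ.hasCompactSupport_normed.contDiff_convolution_left _ ψ.contDiff_normed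
      hf.continuous.locallyIntegrable, fun x => ?_, fun j x => ?_⟩
  · rw [← dist_eq_norm]
    exact ψ.dist_normed_convolution_le hf.continuous.aestronglyMeasurable fun y hy => hr x y hy
  · rw [← dist_eq_norm, pd_convolution ψ.continuous_normed.locallyIntegrable hf hc]
    exact ψ.dist_normed_convolution_le (continuous_pd hf j).aestronglyMeasurable
      fun y hy => hr_pd j x y hy

open Topology in
lemma exists_contDiff_approx_on_compact {f : Pt n → ℂ} (hf : ContDiff ℝ 1 f) {K : Set (Pt n)}
    (hK : IsCompact K) {ε : ℝ} (hε : 0 < ε) :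
    ∃ F : Pt n → ℂ, ContDiff ℝ (⊤ : ℕ∞) F ∧ (∀ x ∈ K, ‖F x - f x‖ ≤ ε) ∧
      ∀ j, ∀ x ∈ K, ‖pd j F x - pd j f x‖ ≤ ε := by
  obtain ⟨R, hR₀, hR⟩ := hK.isBounded.subset_ball_lt 0 (0 : Pt n)
  let χ : ContDiffBump (0 : Pt n) := ⟨R, R + 1, hR₀, lt_add_one R⟩
  have hχ : ∀ x ∈ K, (fun y => χ y • f y) =ᶠ[𝓝 x] f := fun x hx => by
    filter_upwards [Metric.isOpen_ball.mem_nhds (hR hx)] with y hy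
    rw [χ.one_of_mem_closedBall (Metric.ball_subset_closedBall hy), one_smul]
  obtain ⟨F, hF, hFf, hFpd⟩ := exists_contDiff_approx_of_hasCompactSupport
    (χ.contDiff.smul hf) χ.hasCompactSupport.smul_right hε
  refine ⟨F, hF, fun x hx => (hχ x hx).eq_of_nhds ▸ hFf x, fun j x hx => ?_⟩
  have hpd : pd j (fun y => χ y • f y) x = pd j f x := by
    simp only [pd, (hχ x hx).fderiv_eq]
  exact hpd ▸ hFpd j x

lemma integrable_continuous_mul_of_hasCompactSupport {f h : Pt n → ℂ} (hf : Continuous f)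
    (hh : Integrable h) (hc : HasCompactSupport h) : Integrable fun x => f x * h x := by
  rw [← integrableOn_iff_integrable_of_support_subset (s := tsupport h)
    ((Function.support_mul_subset_right f h).trans (subset_tsupport h))]
  exact hh.integrableOn.continuousOn_mul hf.continuousOn hc

lemma norm_sub_mul_le_of_forall_mem_tsupport {f F h : Pt n → ℂ} {ε : ℝ}
    (hF : ∀ x ∈ tsupport h, ‖F x - f x‖ ≤ ε) (x : Pt n) :
    ‖(f x - F x) * h x‖ ≤ ε * ‖h x‖ := by
  by_cases hx : x ∈ tsupport h
  · rw [norm_mul, norm_sub_rev]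
    gcongr
    exact hF x hx
  · simp [image_eq_zero_of_notMem_tsupport hx]

open Filter Topology in
lemma integral_eq_zero_of_forall_smooth {h : Pt n → ℂ} {H : Fin n → Pt n → ℂ}
    (hh : Integrable h) (hhc : HasCompactSupport h) (hH : ∀ j, Integrable (H j))
    (hHc : ∀ j, HasCompactSupport (H j))
    (hsmooth : ∀ F : Pt n → ℂ, ContDiff ℝ (⊤ : ℕ∞) F →
      ∫ x, (F x * h x + ∑ j, pd j F x * H j x) = 0)
    {f : Pt n → ℂ} (hf : ContDiff ℝ 1 f) :
    ∫ x, (f x * h x + ∑ j, pd j f x * H j x) = 0 := by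
  have hint : ∀ F : Pt n → ℂ, ContDiff ℝ 1 F →
      Integrable fun x => F x * h x + ∑ j, pd j F x * H j x := fun F hF =>
    (integrable_continuous_mul_of_hasCompactSupport hF.continuous hh hhc).add <|
      integrable_finsetSum _ fun j _ =>
        integrable_continuous_mul_of_hasCompactSupport (continuous_pd hF j) (hH j) (hHc j)
  have hbound : ∀ ε > 0, ‖∫ x, (f x * h x + ∑ j, pd j f x * H j x)‖
      ≤ ε * ∫ x, (‖h x‖ + ∑ j, ‖H j x‖) := fun ε hε => by
    obtain ⟨F, hF, hFf, hFpd⟩ := exists_contDiff_approx_on_compact hf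
      (hhc.isCompact.union (isCompact_iUnion fun j => (hHc j).isCompact)) hε
    rw [← sub_zero (∫ x, (f x * h x + ∑ j, pd j f x * H j x)), ← hsmooth F hF,
      ← integral_sub (hint f hf) (hint F (hF.of_le (by simp))), ← integral_const_mul]
    refine norm_integral_le_of_norm_le ((hh.norm.add <|
      integrable_finsetSum _ fun j _ => (hH j).norm).const_mul ε) (ae_of_all _ fun x => ?_)
    have hsplit : f x * h x + ∑ j, pd j f x * H j x - (F x * h x + ∑ j, pd j F x * H j x)
        = (f x - F x) * h x + ∑ j, (pd j f x - pd j F x) * H j x := by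
      simp only [sub_mul, sum_sub_distrib]
      ring
    rw [hsplit, mul_add, mul_sum]
    exact norm_add_le_of_le
      (norm_sub_mul_le_of_forall_mem_tsupport (fun y hy => hFf y (.inl hy)) x) <|
      norm_sum_le_of_le _ fun j _ => norm_sub_mul_le_of_forall_mem_tsupport
        (fun y hy => hFpd j y (.inr (Set.mem_iUnion_of_mem j hy))) x
  have hlim : Tendsto (fun ε : ℝ => ε * ∫ x, (‖h x‖ + ∑ j, ‖H j x‖)) (𝓝[>] 0) (𝓝 0) :=
    ((continuous_mul_const _).tendsto' 0 0 (zero_mul _)).mono_left nhdsWithin_le_nhds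
  exact norm_le_zero_iff.1 (ge_of_tendsto hlim (by
    filter_upwards [self_mem_nhdsWithin] with ε hε using hbound ε hε))

/-! ### Weakly differentiable forms and integration by parts -/

lemma Dcl_gd {Φ : Fin n → Form n} {x : Pt n}
    (hΦ : ∀ k S, DifferentiableAt ℝ (fun y => Φ k y S) x) (j : Fin n) :
    Dcl (fun y => gd fun k => Φ k y) j x = gd fun k => Dcl (Φ k) j x := by
  funext S
  simp only [Dcl, gd_apply]
  exact pd_sum_const_mul S _ (fun k => hΦ k (S.erase k)) j

lemma Dcl_gdel {Φ : Fin n → Form n} {x : Pt n}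
    (hΦ : ∀ k S, DifferentiableAt ℝ (fun y => Φ k y S) x) (j : Fin n) :
    Dcl (fun y => gdel fun k => Φ k y) j x = gdel fun k => Dcl (Φ k) j x := by
  funext S
  simp only [Dcl, gdel_apply, ← sum_neg_distrib, ← neg_mul]
  exact pd_sum_const_mul Sᶜ _ (fun k => hΦ k (insert k S)) j

lemma differentiable_pd {f : Pt n → ℂ} (hf : ContDiff ℝ 2 f) (j : Fin n) :
    Differentiable ℝ (pd j f) :=
  (contDiff_pd (k := 1) hf (by norm_num) j).differentiable (by norm_num)

lemma Dcl_Dcl_comm {φ : Form n} (hφ : ∀ S, ContDiff ℝ 2 fun x => φ x S) (x : Pt n)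
    (i j : Fin n) : Dcl (Dcl φ i) j x = Dcl (Dcl φ j) i x :=
  funext fun S => pd_comm (hφ S) j i x

lemma gd_Dcl_gd {φ : Form n} (hφ : ∀ S, ContDiff ℝ 2 fun x => φ x S) (x : Pt n) :
    (gd fun j => Dcl (fun y => gd fun k => Dcl φ k y) j x) = 0 := by
  have hDcl := Dcl_gd (Φ := Dcl φ) fun k S => differentiable_pd (hφ S) k x
  simp only [hDcl]
  exact gd_gd fun i j => Dcl_Dcl_comm hφ x j i

lemma gdel_Dcl_gdel {φ : Form n} (hφ : ∀ S, ContDiff ℝ 2 fun x => φ x S) (x : Pt n) :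
    (gdel fun j => Dcl (fun y => gdel fun k => Dcl φ k y) j x) = 0 := by
  have hDcl := Dcl_gdel (Φ := Dcl φ) fun k S => differentiable_pd (hφ S) k x
  simp only [hDcl]
  exact gdel_gdel fun i j => Dcl_Dcl_comm hφ x j i

lemma TestForm.contDiff {φ : Form n} (hφ : TestForm φ) {m : ℕ∞} (S : Finset (Fin n)) :
    ContDiff ℝ m fun x => φ x S :=
  (hφ S).1.of_le (by exact_mod_cast le_top)

lemma TestForm.gd_Dcl {φ : Form n} (hφ : TestForm φ) :
    TestForm fun x => gd fun j => Dcl φ j x := fun S => by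
  simp only [gd_apply]
  exact IsTest.sum_const_mul S _ fun j => (hφ (S.erase j)).pd j

lemma TestForm.gdel_Dcl {φ : Form n} (hφ : TestForm φ) :
    TestForm fun x => gdel fun j => Dcl φ j x := fun S => by
  simp only [gdel_apply, ← sum_neg_distrib, ← neg_mul]
  exact IsTest.sum_const_mul Sᶜ _ fun j => (hφ (insert j S)).pd j

lemma TestForm.altSign_comp {φ : Form n} (hφ : TestForm φ) :
    TestForm fun x => altSign (φ x) := fun S =>
  ⟨contDiff_const.mul (hφ S).1, (hφ S).2.mul_left⟩

lemma TestForm.Dcl_altSign {φ : Form n} (hφ : TestForm φ) (j : Fin n) (x : Pt n) :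
    Dcl (fun y => altSign (φ y)) j x = altSign (Dcl φ j x) := by
  funext S
  simp only [Dcl, pd, altSign]
  rw [fderiv_const_mul ((hφ S).differentiable x)]
  rfl

/-- `w` is a graded form of class `W^{1,1}_loc` with weak partial derivatives `Dw`. -/
structure W11loc (w : Form n) (Dw : Fin n → Form n) : Prop where
  locallyIntegrable : ∀ S, LocallyIntegrable fun x => w x S
  hasWeakPD : ∀ j S, HasWeakPD j (fun x => w x S) fun x => Dw j x S
  locallyIntegrable_deriv : ∀ j S, LocallyIntegrable fun x => Dw j x S

lemma L2loc.locallyIntegrable {f : Pt n → ℂ} (hf : L2loc f) : LocallyIntegrable f := by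
  refine locallyIntegrable_iff.2 fun K hK => ?_
  have : IsFiniteMeasure (volume.restrict K) :=
    ⟨by rw [Measure.restrict_apply_univ]; exact hK.measure_lt_top⟩
  exact ((memLp_two_iff_integrable_sq_norm hf.1.restrict).2 (hf.2 K hK)).integrable
    (by norm_num)

lemma H1locWith.w11loc {w : Form n} {Dw : Fin n → Form n} (hw : H1locWith w Dw) :
    W11loc w Dw :=
  ⟨fun S => (hw.1 S).locallyIntegrable, hw.2.1, fun j S => (hw.2.2 j S).locallyIntegrable⟩

/-- `h` is a compactly supported function of class `W^{1,1}` with weak partial derivatives `Dh`.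
Since `h` is compactly supported, the weak derivatives are tested against all smooth functions. -/
structure W11c (h : Pt n → ℂ) (Dh : Fin n → Pt n → ℂ) : Prop where
  integrable : Integrable h
  hasCompactSupport : HasCompactSupport h
  integrable_deriv : ∀ j, Integrable (Dh j)
  hasCompactSupport_deriv : ∀ j, HasCompactSupport (Dh j)
  integral_smooth : ∀ F : Pt n → ℂ, ContDiff ℝ (⊤ : ℕ∞) F → ∀ j,
    ∫ x, (F x * Dh j x + pd j F x * h x) = 0

namespace W11c

variable {h k : Pt n → ℂ} {Dh Dk : Fin n → Pt n → ℂ}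

lemma integrable_mul (hh : W11c h Dh) {f : Pt n → ℂ} (hf : Continuous f) :
    Integrable fun x => f x * h x :=
  integrable_continuous_mul_of_hasCompactSupport hf hh.integrable hh.hasCompactSupport

lemma integrable_mul_deriv (hh : W11c h Dh) {f : Pt n → ℂ} (hf : Continuous f) (j : Fin n) :
    Integrable fun x => f x * Dh j x :=
  integrable_continuous_mul_of_hasCompactSupport hf (hh.integrable_deriv j)
    (hh.hasCompactSupport_deriv j)

lemma integral_contDiff (hh : W11c h Dh) {f : Pt n → ℂ} (hf : ContDiff ℝ 1 f) (j : Fin n) :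
    ∫ x, (f x * Dh j x + pd j f x * h x) = 0 := by
  have hsum : ∀ F : Pt n → ℂ, ∀ x, F x * Dh j x + ∑ i, pd i F x * (Pi.single j h : _ → _) i x
      = F x * Dh j x + pd j F x * h x := fun F x => by
    rw [sum_eq_single j (fun i _ hi => by simp [hi]) (by simp), Pi.single_eq_same]
  simp only [← hsum]
  refine integral_eq_zero_of_forall_smooth (hh.integrable_deriv j)
    (hh.hasCompactSupport_deriv j) (fun i => ?_) (fun i => ?_) (fun F hF => ?_) hf
  · obtain rfl | hi := eq_or_ne i j
    · simpa using hh.integrable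
    · simp [hi, Pi.zero_def]
  · obtain rfl | hi := eq_or_ne i j
    · simpa using hh.hasCompactSupport
    · simpa [hi] using HasCompactSupport.zero
  · simp only [hsum, hh.integral_smooth F hF j]

lemma add (hh : W11c h Dh) (hk : W11c k Dk) :
    W11c (fun x => h x + k x) fun j x => Dh j x + Dk j x where
  integrable := hh.integrable.add hk.integrable
  hasCompactSupport := hh.hasCompactSupport.add hk.hasCompactSupport
  integrable_deriv j := (hh.integrable_deriv j).add (hk.integrable_deriv j)
  hasCompactSupport_deriv j := (hh.hasCompactSupport_deriv j).add (hk.hasCompactSupport_deriv j)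
  integral_smooth F hF j := by
    have hF₁ : ContDiff ℝ 1 F := hF.of_le (by simp)
    have hsum := integral_add
      ((hh.integrable_mul_deriv hF.continuous j).add (hh.integrable_mul (continuous_pd hF₁ j)))
      ((hk.integrable_mul_deriv hF.continuous j).add (hk.integrable_mul (continuous_pd hF₁ j)))
    simp only [Pi.add_apply, hh.integral_smooth F hF j, hk.integral_smooth F hF j,
      add_zero] at hsum
    rw [← hsum]
    exact integral_congr_ae (ae_of_all _ fun x => by ring)

lemma const_mul (hh : W11c h Dh) (c : ℂ) :
    W11c (fun x => c * h x) fun j x => c * Dh j x where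
  integrable := hh.integrable.const_mul c
  hasCompactSupport := hh.hasCompactSupport.mul_left
  integrable_deriv j := (hh.integrable_deriv j).const_mul c
  hasCompactSupport_deriv j := (hh.hasCompactSupport_deriv j).mul_left
  integral_smooth F hF j := by
    rw [← mul_zero c, ← hh.integral_smooth F hF j, ← integral_const_mul]
    exact integral_congr_ae (ae_of_all _ fun x => by ring)

end W11c

lemma IsTest.integrable_mul {ψ : Pt n → ℂ} (hψ : IsTest ψ) {u : Pt n → ℂ}
    (hu : LocallyIntegrable u) : Integrable fun x => u x * ψ x :=
  hu.integrable_smul_right_of_hasCompactSupport hψ.1.continuous hψ.2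

lemma W11loc.w11c_mul {w : Form n} {Dw : Fin n → Form n} (hw : W11loc w Dw) {ψ : Pt n → ℂ}
    (hψ : IsTest ψ) (S : Finset (Fin n)) :
    W11c (fun x => w x S * ψ x) fun j x => Dw j x S * ψ x + w x S * pd j ψ x where
  integrable := hψ.integrable_mul (hw.locallyIntegrable S)
  hasCompactSupport := hψ.2.mul_left
  integrable_deriv j := (hψ.integrable_mul (hw.locallyIntegrable_deriv j S)).add
    ((hψ.pd j).integrable_mul (hw.locallyIntegrable S))
  hasCompactSupport_deriv j := hψ.2.mul_left.add (hψ.pd j).2.mul_left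
  integral_smooth F hF j := by
    have hFψ : IsTest fun x => F x * ψ x := ⟨hF.mul hψ.1, hψ.2.mul_left⟩
    have hparts : ∫ x, (Dw j x S * (F x * ψ x) + w x S * pd j (fun y => F y * ψ y) x) = 0 := by
      rw [integral_add (hFψ.integrable_mul (hw.locallyIntegrable_deriv j S))
        ((hFψ.pd j).integrable_mul (hw.locallyIntegrable S)), hw.hasWeakPD j S _ hFψ,
        neg_add_cancel]
    rw [← hparts]
    refine integral_congr_ae (ae_of_all _ fun x => ?_)
    simp only [pd_mul (hF.differentiable (by simp) x) (hψ.differentiable x)]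
    ring

/-- The weak partial derivatives `Du`, `Dv` of the graded forms `u`, `v` satisfy the integration
by parts formula `∫ (∂_j u_S) v_T = -∫ u_S ∂_j v_T` for all components. -/
structure IntegratesByParts (u : Form n) (Du : Fin n → Form n) (v : Form n)
    (Dv : Fin n → Form n) : Prop where
  integrable_left : ∀ j S T, Integrable fun x => Du j x S * v x T
  integrable_right : ∀ j S T, Integrable fun x => u x S * Dv j x T
  integral_add_eq_zero : ∀ j S T, (∫ x, Du j x S * v x T) + ∫ x, u x S * Dv j x T = 0

namespace IntegratesByParts

variable {u v : Form n} {Du Dv : Fin n → Form n}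

lemma symm (h : IntegratesByParts u Du v Dv) : IntegratesByParts v Dv u Du where
  integrable_left j S T := by simpa only [mul_comm] using h.integrable_right j T S
  integrable_right j S T := by simpa only [mul_comm] using h.integrable_left j T S
  integral_add_eq_zero j S T := by
    simpa only [mul_comm, add_comm] using h.integral_add_eq_zero j T S

lemma integrable_ginner_gd (h : IntegratesByParts u Du v Dv) :
    Integrable fun x => ginner (gd fun j => Du j x) (v x) := by
  simp only [ginner_gd]
  exact integrable_finsetSum _ fun j _ => integrable_finsetSum _ fun S _ =>
    (h.integrable_left j S _).const_mul _

lemma integrable_ginner_gdel (h : IntegratesByParts u Du v Dv) :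
    Integrable fun x => ginner (u x) (gdel fun j => Dv j x) := by
  simp only [ginner_gdel]
  exact (integrable_finsetSum _ fun j _ => integrable_finsetSum _ fun S _ =>
    (h.integrable_right j S _).const_mul _).neg

lemma integral_ginner_gd (h : IntegratesByParts u Du v Dv) :
    ∫ x, ginner (gd fun j => Du j x) (v x) = ∫ x, ginner (u x) (gdel fun j => Dv j x) := by
  have hl := fun j S => (h.integrable_left j S (insert j S)).const_mul (msgn {j} S)
  have hr := fun j S => (h.integrable_right j S (insert j S)).const_mul (msgn {j} S)
  simp only [ginner_gd, ginner_gdel]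
  rw [integral_neg, integral_finsetSum _ fun j _ => integrable_finsetSum _ fun S _ => hl j S,
    integral_finsetSum _ fun j _ => integrable_finsetSum _ fun S _ => hr j S,
    ← sum_neg_distrib]
  refine sum_congr rfl fun j _ => ?_
  rw [integral_finsetSum _ fun S _ => hl j S, integral_finsetSum _ fun S _ => hr j S,
    ← sum_neg_distrib]
  refine sum_congr rfl fun S _ => ?_
  rw [integral_const_mul, integral_const_mul]
  linear_combination msgn {j} S * h.integral_add_eq_zero j S (insert j S)

lemma integrable_ginner_gdel_left (h : IntegratesByParts u Du v Dv) :
    Integrable fun x => ginner (gdel fun j => Du j x) (v x) := by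
  simpa only [ginner_comm] using h.symm.integrable_ginner_gdel

lemma integral_ginner_gdel (h : IntegratesByParts u Du v Dv) :
    ∫ x, ginner (gdel fun j => Du j x) (v x) = ∫ x, ginner (u x) (gd fun j => Dv j x) := by
  simpa only [ginner_comm] using h.symm.integral_ginner_gd.symm

lemma integrable_ginner_dirac_left (h : IntegratesByParts u Du v Dv) :
    Integrable fun x => ginner (dirac fun j => Du j x) (v x) := by
  simp only [dirac, ginner_add_left]
  exact h.integrable_ginner_gd.add h.integrable_ginner_gdel_left

lemma integral_ginner_dirac (h : IntegratesByParts u Du v Dv) :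
    ∫ x, ginner (dirac fun j => Du j x) (v x) = ∫ x, ginner (u x) (dirac fun j => Dv j x) := by
  have hgd : Integrable fun x => ginner (u x) (gd fun j => Dv j x) := by
    simpa only [ginner_comm] using h.symm.integrable_ginner_gd
  simp only [dirac, ginner_add_left, ginner_add_right]
  rw [integral_add h.integrable_ginner_gd h.integrable_ginner_gdel_left,
    integral_add hgd h.integrable_ginner_gdel, h.integral_ginner_gd, h.integral_ginner_gdel,
    add_comm]

end IntegratesByParts

lemma W11loc.integratesByParts {w φ : Form n} {Dw : Fin n → Form n} (hw : W11loc w Dw)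
    (hφ : TestForm φ) {c : Pt n → ℂ} (hc : ContDiff ℝ 1 c) :
    IntegratesByParts w Dw (fun x => c x • φ x)
      fun j x => c x • Dcl φ j x + pd j c x • φ x := by
  have hleft : ∀ j S T, Integrable fun x => Dw j x S * (c x * φ x T) := fun j S T =>
    (hw.locallyIntegrable_deriv j S).integrable_smul_right_of_hasCompactSupport
      (hc.continuous.mul (hφ T).1.continuous) (hφ T).2.mul_left
  have hright : ∀ j S T,
      Integrable fun x => w x S * (c x * Dcl φ j x T + pd j c x * φ x T) := fun j S T =>
    (hw.locallyIntegrable S).integrable_smul_right_of_hasCompactSupport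
      ((hc.continuous.mul ((hφ T).pd j).1.continuous).add
        ((continuous_pd hc j).mul (hφ T).1.continuous))
      (((hφ T).pd j).2.mul_left.add (hφ T).2.mul_left)
  refine ⟨hleft, hright, fun j S T => ?_⟩
  refine (integral_add (hleft j S T) (hright j S T)).symm.trans ?_
  rw [← (hw.w11c_mul (hφ T) S).integral_contDiff hc j]
  refine integral_congr_ae (ae_of_all _ fun x => ?_)
  simp only [Dcl]
  ring

lemma W11loc.integratesByParts_test {w φ : Form n} {Dw : Fin n → Form n} (hw : W11loc w Dw)
    (hφ : TestForm φ) : IntegratesByParts w Dw φ (Dcl φ) := by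
  simpa [pd] using hw.integratesByParts hφ (contDiff_const (c := (1 : ℂ)))

lemma integratesByParts_of_contDiff {u h : Form n} {Dh : Fin n → Form n}
    (hu : ∀ S, ContDiff ℝ 1 fun x => u x S)
    (hh : ∀ S, W11c (fun x => h x S) fun j x => Dh j x S) :
    IntegratesByParts u (Dcl u) h Dh where
  integrable_left j S T := (hh T).integrable_mul (continuous_pd (hu S) j)
  integrable_right j S T := (hh T).integrable_mul_deriv (hu S).continuous j
  integral_add_eq_zero j S T := by
    rw [add_comm]
    exact (integral_add ((hh T).integrable_mul_deriv (hu S).continuous j)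
      ((hh T).integrable_mul (continuous_pd (hu S) j))).symm.trans
      ((hh T).integral_contDiff (hu S) j)

/-- `d` and `δ` being of square zero, the cross terms `∫⟨dw, δφ⟩` and `∫⟨δw, dφ⟩` vanish. -/
lemma W11loc.integral_ginner_dirac {w φ : Form n} {Dw : Fin n → Form n} (hw : W11loc w Dw)
    (hφ : TestForm φ) :
    ∫ x, ginner (dirac fun j => Dw j x) (dirac fun j => Dcl φ j x)
      = ∫ x, (ginner (gdel fun j => Dw j x) (gdel fun j => Dcl φ j x)
          + ginner (gd fun j => Dw j x) (gd fun j => Dcl φ j x)) := by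
  have hd := hw.integratesByParts_test hφ.gd_Dcl
  have hδ := hw.integratesByParts_test hφ.gdel_Dcl
  have hdδ : ∫ x, ginner (gd fun j => Dw j x) (gdel fun j => Dcl φ j x) = 0 := by
    simp only [hδ.integral_ginner_gd, gdel_Dcl_gdel fun S => hφ.contDiff (m := 2) S,
      ginner_zero_right, integral_zero]
  have hδd : ∫ x, ginner (gdel fun j => Dw j x) (gd fun j => Dcl φ j x) = 0 := by
    simp only [hd.integral_ginner_gdel, gd_Dcl_gd fun S => hφ.contDiff (m := 2) S,
      ginner_zero_right, integral_zero]
  have hsplit : ∀ x, ginner (dirac fun j => Dw j x) (dirac fun j => Dcl φ j x)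
      = ginner (gdel fun j => Dw j x) (gdel fun j => Dcl φ j x)
        + ginner (gd fun j => Dw j x) (gd fun j => Dcl φ j x)
        + (ginner (gd fun j => Dw j x) (gdel fun j => Dcl φ j x)
          + ginner (gdel fun j => Dw j x) (gd fun j => Dcl φ j x)) := fun x => by
    simp only [dirac, ginner_add_left, ginner_add_right]
    ring
  simp only [hsplit]
  refine (integral_add (hδ.integrable_ginner_gdel_left.add hd.integrable_ginner_gd)
    (hδ.integrable_ginner_gd.add hd.integrable_ginner_gdel_left)).trans ?_
  simp only [Pi.add_apply]
  rw [integral_add hδ.integrable_ginner_gd hd.integrable_ginner_gdel_left, hdδ, hδd, add_zero,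
    add_zero]

lemma oneG_eq_gd (c : Fin n → ℂ) : oneG c = gd fun j => Pi.single ∅ (c j) := by
  funext S
  rw [oneG, gd_apply]
  refine (sum_subset_zero_on_sdiff (subset_univ S) (fun j hj => if_neg ?_) fun j hj => ?_).symm
  · rintro rfl
    simp at hj
  · obtain rfl | hS := eq_or_ne S {j}
    · simp [msgn, filter_singleton]
    · have : S.erase j ≠ ∅ := by simp [erase_eq_empty_iff, hS, ne_empty_of_mem hj]
      simp [hS, this]

lemma Dcl_single (F : Pt n → ℂ) (S : Finset (Fin n)) (j : Fin n) (x : Pt n) :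
    Dcl (fun y => Pi.single S (F y)) j x = Pi.single S (pd j F x) := by
  funext T
  obtain rfl | hT := eq_or_ne T S
  · simp [Dcl]
  · simp [Dcl, pd, hT]

lemma oneG_singleton (c : Fin n → ℂ) (j : Fin n) : oneG c {j} = c j := by
  simp [oneG]

lemma ginner_oneG (c : Fin n → ℂ) (v : GF n) : ginner (oneG c) v = ∑ j, c j * v {j} := by
  simp only [ginner, oneG, sum_mul, ite_mul, zero_mul]
  rw [sum_comm]
  simp

/-- A weak form of `dd = 0`: the exact form `da` is orthogonal to coexact forms. The point is that
`a` is only of class `C¹`. -/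
lemma integral_ginner_differential_gdel {a : Pt n → ℂ} (ha : ContDiff ℝ 1 a) {h : Form n}
    {Dh : Fin n → Form n} (hh : ∀ S, W11c (fun x => h x S) fun j x => Dh j x S) :
    ∫ x, ginner (oneG fun j => pd j a x) (gdel fun j => Dh j x) = 0 := by
  have hsmooth : ∀ F : Pt n → ℂ, ContDiff ℝ 2 F →
      ∫ x, ginner (oneG fun j => pd j F x) (gdel fun j => Dh j x) = 0 := fun F hF => by
    have hF₀ : ∀ S, ContDiff ℝ 2 fun x => (Pi.single ∅ (F x) : GF n) S := fun S => by
      obtain rfl | hS := eq_or_ne S ∅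
      · simpa using hF
      · simpa [hS] using contDiff_const
    have hdF : ∀ S, ContDiff ℝ 1 fun x => gd (fun j => Dcl (fun y => Pi.single ∅ (F y)) j x) S :=
      fun S => by
        simp only [gd_apply]
        exact ContDiff.sum fun j _ => contDiff_const.mul
          (contDiff_pd (k := 1) (hF₀ _) (by norm_num) j)
    have hparts := (integratesByParts_of_contDiff hdF hh).integral_ginner_gd
    simp only [gd_Dcl_gd hF₀, ginner_comm 0, ginner_zero_right, integral_zero] at hparts
    simpa only [Dcl_single, ← oneG_eq_gd] using hparts.symm
  have hgdel : ∀ k, Integrable (fun x => gdel (fun j => Dh j x) {k}) ∧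
      HasCompactSupport (fun x => gdel (fun j => Dh j x) {k}) := fun k => by
    simp only [gdel_apply, ← sum_neg_distrib, ← neg_mul]
    refine ⟨integrable_finsetSum _ fun j _ => ((hh _).integrable_deriv j).const_mul _,
      hasCompactSupport_sum_const_mul _ _ fun j => (hh _).hasCompactSupport_deriv j⟩
  simp only [ginner_oneG] at hsmooth ⊢
  simpa using integral_eq_zero_of_forall_smooth (integrable_zero _ _ _) HasCompactSupport.zero
    (fun k => (hgdel k).1) (fun k => (hgdel k).2)
    (fun F hF => by simpa using hsmooth F (mod_cast contDiff_infty.1 hF 2)) ha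

lemma integrable_ginner_oneG_gdel {α : Pt n → Fin n → ℂ} (hα : Continuous α) {h : Form n}
    {Dh : Fin n → Form n} (hh : ∀ S, W11c (fun x => h x S) fun j x => Dh j x S) :
    Integrable fun x => ginner (oneG (α x)) (gdel fun j => Dh j x) := by
  simp only [ginner_oneG, gdel_apply, mul_neg, mul_sum, ← mul_assoc]
  exact integrable_finsetSum _ fun k _ => (integrable_finsetSum _ fun j _ =>
    (hh _).integrable_mul_deriv (((continuous_apply k).comp hα).mul continuous_const) j).neg

/-! ### Components in dimension three -/

lemma wedge_oneG_eq_gd (c : Fin n → ℂ) (v : GF n) : wedge (oneG c) v = gd fun j => c j • v := by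
  funext S
  simp only [wedge_oneG_apply, gd_apply, Pi.smul_apply, smul_eq_mul]

lemma vee_oneG_eq_altSign_gdel (c : Fin n → ℂ) (v : GF n) :
    vee (oneG c) v = -altSign (gdel fun j => c j • v) := by
  funext S
  simp only [vee_oneG_apply, gdel_apply, altSign, Pi.neg_apply, Pi.smul_apply, smul_eq_mul,
    mul_neg, neg_neg, mul_sum]
  refine sum_congr rfl fun j hj => ?_
  rw [msgn_singleton_right_eq (mem_compl.1 hj), mul_assoc]

lemma sum_finset_fin_three {M : Type*} [AddCommMonoid M] (f : Finset (Fin 3) → M) :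
    ∑ S, f S = f ∅ + f {0} + f {1} + f {2} + f {0, 1} + f {0, 2} + f {1, 2} + f {0, 1, 2} := by
  rw [show (univ : Finset (Finset (Fin 3)))
    = {∅, {0}, {1}, {2}, {0, 1}, {0, 2}, {1, 2}, {0, 1, 2}} by decide]
  repeat rw [sum_insert (by decide)]
  simp only [sum_singleton, add_assoc]

lemma gd_fin_three (D : Fin 3 → GF 3) :
    gd D ∅ = 0 ∧ (∀ j, gd D {j} = D j ∅) ∧ gd D {0, 1} = D 0 {1} - D 1 {0} ∧
      gd D {0, 2} = D 0 {2} - D 2 {0} ∧ gd D {1, 2} = D 1 {2} - D 2 {1} ∧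
      gd D {0, 1, 2} = D 0 {1, 2} - D 1 {0, 2} + D 2 {0, 1} := by
  simp only [gd_apply]
  refine ⟨by simp, fun j => by simp [msgn_singleton_left, filter_singleton], ?_, ?_, ?_, ?_⟩
  all_goals simp +decide [msgn_singleton_left, filter_insert, filter_singleton,
    erase_insert_eq_erase, erase_insert_of_ne, erase_singleton, sub_eq_add_neg, add_assoc]

lemma gdel_fin_three (D : Fin 3 → GF 3) :
    gdel D ∅ = -(D 0 {0} + D 1 {1} + D 2 {2}) ∧ gdel D {0} = D 1 {0, 1} + D 2 {0, 2} ∧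
      gdel D {1} = -D 0 {0, 1} + D 2 {1, 2} ∧ gdel D {2} = -D 0 {0, 2} - D 1 {1, 2} ∧
      gdel D {0, 1} = -D 2 {0, 1, 2} ∧ gdel D {0, 2} = D 1 {0, 1, 2} ∧
      gdel D {1, 2} = -D 0 {0, 1, 2} ∧ gdel D {0, 1, 2} = 0 := by
  have hcompl : ({0} : Finset (Fin 3))ᶜ = {1, 2} ∧ ({1} : Finset (Fin 3))ᶜ = {0, 2} ∧
      ({2} : Finset (Fin 3))ᶜ = {0, 1} ∧ ({0, 1} : Finset (Fin 3))ᶜ = {2} ∧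
      ({0, 2} : Finset (Fin 3))ᶜ = {1} ∧ ({1, 2} : Finset (Fin 3))ᶜ = {0} ∧
      ({0, 1, 2} : Finset (Fin 3))ᶜ = ∅ := by decide
  have hinsert : ({1, 0} : Finset (Fin 3)) = {0, 1} ∧ ({2, 0} : Finset (Fin 3)) = {0, 2} ∧
      ({2, 1} : Finset (Fin 3)) = {1, 2} ∧ ({1, 0, 2} : Finset (Fin 3)) = {0, 1, 2} ∧
      ({2, 0, 1} : Finset (Fin 3)) = {0, 1, 2} := by decide
  simp only [gdel_apply, hcompl]
  refine ⟨?_, ?_, ?_, ?_, ?_, ?_, ?_, ?_⟩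
  all_goals simp [hinsert, Fin.sum_univ_three, msgn_singleton_left, filter_insert, filter_singleton,
    sub_eq_add_neg, add_comm]

lemma proj_fin_three (v : GF 3) (l : ℕ) :
    proj l v ∅ = (if 0 = l then v ∅ else 0) ∧ (∀ j, proj l v {j} = if 1 = l then v {j} else 0) ∧
      proj l v {0, 1} = (if 2 = l then v {0, 1} else 0) ∧
      proj l v {0, 2} = (if 2 = l then v {0, 2} else 0) ∧
      proj l v {1, 2} = (if 2 = l then v {1, 2} else 0) ∧
      proj l v {0, 1, 2} = if 3 = l then v {0, 1, 2} else 0 :=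
  ⟨rfl, fun _ => rfl, rfl, rfl, rfl, rfl⟩

lemma altSign_fin_three (v : GF 3) :
    altSign v ∅ = v ∅ ∧ (∀ j, altSign v {j} = -v {j}) ∧ altSign v {0, 1} = v {0, 1} ∧
      altSign v {0, 2} = v {0, 2} ∧ altSign v {1, 2} = v {1, 2} ∧
      altSign v {0, 1, 2} = -v {0, 1, 2} := by
  simp [altSign, Odd.neg_one_pow (n := 3) (by decide)]

lemma P0t_fin_three (α β : Fin 3 → ℂ) (v : GF 3) :
    P0t (oneG α) (oneG β) 0 v ∅ = β 0 * v {0} + β 1 * v {1} + β 2 * v {2} ∧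
      P0t (oneG α) (oneG β) 0 v {0} = α 0 * v ∅ - α 1 * v {0, 1} - α 2 * v {0, 2} ∧
      P0t (oneG α) (oneG β) 0 v {1} = α 1 * v ∅ + α 0 * v {0, 1} - α 2 * v {1, 2} ∧
      P0t (oneG α) (oneG β) 0 v {2} = α 2 * v ∅ + α 0 * v {0, 2} + α 1 * v {1, 2} ∧
      P0t (oneG α) (oneG β) 0 v {0, 1} = β 0 * v {1} - β 1 * v {0} + β 2 * v {0, 1, 2} ∧
      P0t (oneG α) (oneG β) 0 v {0, 2} = β 0 * v {2} - β 2 * v {0} - β 1 * v {0, 1, 2} ∧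
      P0t (oneG α) (oneG β) 0 v {1, 2} = β 1 * v {2} - β 2 * v {1} + β 0 * v {0, 1, 2} ∧
      P0t (oneG α) (oneG β) 0 v {0, 1, 2} = α 0 * v {1, 2} - α 1 * v {0, 2} + α 2 * v {0, 1} := by
  simp +decide only [P0t, wedge_oneG_eq_gd, vee_oneG_eq_altSign_gdel, Pi.add_apply, Pi.sub_apply,
    Pi.neg_apply, Pi.smul_apply, smul_eq_mul, gd_fin_three, gdel_fin_three, altSign_fin_three,
    proj_fin_three, ↓reduceIte]
  refine ⟨?_, ?_, ?_, ?_, ?_, ?_, ?_, ?_⟩ <;> ring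

lemma ginner_fin_three (u v : GF 3) :
    ginner u v = u ∅ * v ∅ + u {0} * v {0} + u {1} * v {1} + u {2} * v {2}
      + u {0, 1} * v {0, 1} + u {0, 2} * v {0, 2} + u {1, 2} * v {1, 2}
      + u {0, 1, 2} * v {0, 1, 2} :=
  sum_finset_fin_three _

lemma ginner_P0t_P0t (α β : Fin 3 → ℂ) (u v : GF 3) :
    ginner (P0t (oneG α) (oneG β) 0 u) (P0t (oneG α) (oneG β) 0 v)
      = ginner (oneG α) (oneG α) * ginner (proj 0 u + proj 2 u) (proj 0 v + proj 2 v)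
        + ginner (oneG β) (oneG β) * ginner (proj 1 u + proj 3 u) (proj 1 v + proj 3 v) := by
  simp only [ginner_oneG, oneG_singleton, Fin.sum_univ_three]
  simp +decide only [ginner_fin_three, P0t_fin_three, Pi.add_apply, proj_fin_three, ↓reduceIte]
  ring

/-- The graded form `u⁰ ∧ v + v⁰ ∧ u`, whose coderivative is the part of the cross terms with `da`
that integrates to zero. -/
def symWedgeBot (u v : GF n) : GF n := fun S => u ∅ * v S + u S * v ∅

/-- The graded form `u ∨ vⁿ + v ∨ uⁿ`, whose coderivative is the part of the cross terms with `db`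
that integrates to zero. -/
def symVeeTop (u v : GF n) : GF n := fun S => msgn S Sᶜ * (u Sᶜ * v univ + u univ * v Sᶜ)

/-- The integrand of the fourth term of `⟨Q w, φ⟩`: the scalar product of `α` with the gradient of
`⟨-u⁰ + u², v⁰ + v²⟩` plus that of `β` with the gradient of `⟨u¹ - u³, v¹ + v³⟩`, where `D` and `E`
are the partial derivatives of `u` and `v`. -/
def scalarPair (α β : Fin 3 → ℂ) (u v : GF 3) (D E : Fin 3 → GF 3) : ℂ :=
  (∑ j, α j *
    (ginner (proj 2 (D j) - proj 0 (D j)) (proj 0 v + proj 2 v)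
      + ginner (proj 2 u - proj 0 u) (proj 0 (E j) + proj 2 (E j))))
  + ∑ j, β j *
    (ginner (proj 1 (D j) - proj 3 (D j)) (proj 1 v + proj 3 v)
      + ginner (proj 1 u - proj 3 u) (proj 1 (E j) + proj 3 (E j)))

lemma symVeeTop_fin_three (u v : GF 3) :
    symVeeTop u v {0, 1} = u {2} * v {0, 1, 2} + u {0, 1, 2} * v {2} ∧
      symVeeTop u v {0, 2} = -(u {1} * v {0, 1, 2} + u {0, 1, 2} * v {1}) ∧
      symVeeTop u v {1, 2} = u {0} * v {0, 1, 2} + u {0, 1, 2} * v {0} := by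
  have hcompl : ({0, 1} : Finset (Fin 3))ᶜ = {2} ∧ ({0, 2} : Finset (Fin 3))ᶜ = {1} ∧
    ({1, 2} : Finset (Fin 3))ᶜ = {0} ∧ (univ : Finset (Fin 3)) = {0, 1, 2} := by decide
  simp [symVeeTop, hcompl, msgn_singleton_right, filter_insert, filter_singleton]

/-- Up to two divergences, which integrate to zero against the exact forms `da` and `db`, the
derivatives of `w` and `φ` enter the cross terms only through the terms occurring in `Q`. -/
lemma neg_ginner_dirac_P0t_add (α β : Fin 3 → ℂ) (u v : GF 3) (D E : Fin 3 → GF 3) :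
    -(ginner (dirac fun j => altSign (D j)) (P0t (oneG α) (oneG β) 0 v)
        + ginner (P0t (oneG α) (oneG β) 0 u) (dirac fun j => altSign (E j)))
      = scalarPair α β u v D E
        + dstarPair β (fun j => u {j}) (fun j => v {j}) (fun j k => D j {k}) (fun j k => E j {k})
        + dstarPair α (star2 u) (star2 v) (fun j k => star2 (D j) k) (fun j k => star2 (E j) k)
        - ginner (oneG α) (gdel fun j => symWedgeBot (D j) v + symWedgeBot u (E j))
        + ginner (oneG β) (gdel fun j => symVeeTop (D j) v + symVeeTop u (E j)) := by
  simp only [ginner_oneG, scalarPair, dstarPair, Fin.sum_univ_three]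
  simp only [ginner_fin_three, P0t_fin_three, dirac, Pi.add_apply, Pi.sub_apply, gd_fin_three,
    gdel_fin_three, altSign_fin_three, symWedgeBot, symVeeTop_fin_three, proj_fin_three, star2]
  simp only [↓reduceIte, zero_ne_one, one_ne_zero, OfNat.zero_ne_ofNat, OfNat.ofNat_ne_zero,
    OfNat.one_ne_ofNat, OfNat.ofNat_ne_one, Nat.reduceEqDiff, Fin.isValue, Fin.reduceEq]
  ring

lemma ginner_P0t_add_ginner_P0t (c : ℂ) (α β : Fin 3 → ℂ) (u v : GF 3) :
    c * (ginner (P0t (oneG α) (oneG β) 0 u) v + ginner u (P0t (oneG α) (oneG β) 0 v))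
        + ginner u (dirac fun j => (c * (α j + β j)) • altSign v)
      = 2 * ginner (vee (oneG fun j => c * (α j + β j)) (proj 1 u + proj 3 u)
          + wedge (oneG fun j => c * (α j + β j)) (proj 0 u + proj 2 u)) v := by
  simp +decide only [ginner_fin_three, P0t_fin_three, dirac, Pi.add_apply, Pi.neg_apply,
    Pi.smul_apply, smul_eq_mul, wedge_oneG_eq_gd, vee_oneG_eq_altSign_gdel, gd_fin_three,
    gdel_fin_three, altSign_fin_three, proj_fin_three, ↓reduceIte]
  ring

/-! ### Integrability of pairings of jets -/

section Continuity

variable {X : Type*} [TopologicalSpace X] {f g : X → GF n}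

@[fun_prop]
lemma continuous_wedge (hf : Continuous f) (hg : Continuous g) :
    Continuous fun x => wedge (f x) (g x) := by
  unfold wedge; fun_prop

@[fun_prop]
lemma continuous_vee (hf : Continuous f) (hg : Continuous g) :
    Continuous fun x => vee (f x) (g x) := by
  unfold vee; fun_prop

@[fun_prop]
lemma continuous_ginner (hf : Continuous f) (hg : Continuous g) :
    Continuous fun x => ginner (f x) (g x) := by
  unfold ginner; fun_prop

@[fun_prop]
lemma continuous_proj (l : ℕ) (hf : Continuous f) : Continuous fun x => proj l (f x) :=
  continuous_pi fun S => by
    unfold proj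
    split_ifs <;> fun_prop

@[fun_prop]
lemma continuous_altSign (hf : Continuous f) : Continuous fun x => altSign (f x) := by
  unfold altSign; fun_prop

@[fun_prop]
lemma continuous_oneG {c : X → Fin n → ℂ} (hc : Continuous c) :
    Continuous fun x => oneG (c x) :=
  continuous_pi fun S => continuous_finsetSum _ fun j _ => by split_ifs <;> fun_prop

@[fun_prop]
lemma continuous_gd {D : X → Fin n → GF n} (hD : Continuous D) :
    Continuous fun x => gd (D x) := by
  unfold gd; fun_prop

@[fun_prop]
lemma continuous_gdel {D : X → Fin n → GF n} (hD : Continuous D) :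
    Continuous fun x => gdel (D x) := by
  unfold gdel; fun_prop

@[fun_prop]
lemma continuous_dirac {D : X → Fin n → GF n} (hD : Continuous D) :
    Continuous fun x => dirac (D x) := by
  unfold dirac; fun_prop

@[fun_prop]
lemma continuous_P0t {A B v : X → GF 3} {c : X → ℂ} (hA : Continuous A) (hB : Continuous B)
    (hc : Continuous c) (hv : Continuous v) :
    Continuous fun x => P0t (A x) (B x) (c x) (v x) := by
  unfold P0t; fun_prop

@[fun_prop]
lemma continuous_star2 {u : X → GF 3} (hu : Continuous u) : Continuous fun x => star2 (u x) :=
  continuous_pi fun k => by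
    unfold star2
    split_ifs <;> fun_prop

@[fun_prop]
lemma continuous_dstarPair {c u v : X → Fin 3 → ℂ} {du dv : X → Fin 3 → Fin 3 → ℂ}
    (hc : Continuous c) (hu : Continuous u) (hv : Continuous v) (hdu : Continuous du)
    (hdv : Continuous dv) : Continuous fun x => dstarPair (c x) (u x) (v x) (du x) (dv x) := by
  unfold dstarPair; fun_prop

end Continuity

lemma P0t_smul (A B : GF 3) (c d : ℂ) (v : GF 3) : P0t A B c (d • v) = d • P0t A B c v := by
  simp only [P0t, proj_smul, ← smul_add, wedge_smul_right, vee_smul_right, ← smul_sub,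
    smul_comm c d v]

lemma star2_smul (u : GF 3) (c : ℂ) : star2 (c • u) = c • star2 u := by
  funext k
  simp [star2]

/-- The value of a graded form at a point, together with the values of its partial derivatives. -/
abbrev Jet (n : ℕ) := GF n × (Fin n → GF n)

/-- The jet of the graded form `w` with (weak) partial derivatives `Dw`. -/
def jet (w : Form n) (Dw : Fin n → Form n) (x : Pt n) : Jet n := (w x, fun j => Dw j x)

/-- `B` is a continuous family of pairings of jets, homogeneous in both jets. Additivity is not
required, since only integrability of `B` along jets is deduced from these properties. -/
structure JetPairing (B : Pt n → Jet n → Jet n → ℂ) : Prop where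
  continuous : Continuous fun p : Pt n × Jet n × Jet n => B p.1 p.2.1 p.2.2
  smul_smul : ∀ x (c d : ℂ) U V, B x (c • U) (d • V) = c * d * B x U V

lemma JetPairing.exists_norm_le {B : Pt n → Jet n → Jet n → ℂ} (hB : JetPairing B)
    {Φ : Pt n → Jet n} (hΦ : Continuous Φ) {K : Set (Pt n)} (hK : IsCompact K) :
    ∃ C : ℝ, ∀ x ∈ K, ∀ U, ‖B x U (Φ x)‖ ≤ C * ‖U‖ := by
  have hcont : Continuous fun p : Pt n × Jet n => B p.1 p.2 (Φ p.1) :=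
    hB.continuous.comp (by fun_prop : Continuous fun p : Pt n × Jet n => (p.1, p.2, Φ p.1))
  obtain ⟨C, hC⟩ := (hK.prod (isCompact_sphere (0 : Jet n) 1)).exists_bound_of_continuousOn
    hcont.continuousOn
  refine ⟨C, fun x hx U => ?_⟩
  obtain rfl | hU := eq_or_ne U 0
  · have hzero := hB.smul_smul x 0 1 0 (Φ x)
    simp only [zero_smul, one_smul, zero_mul] at hzero
    simp [hzero]
  have hunit : ‖((‖U‖ : ℂ)⁻¹ • U)‖ = 1 := by
    simp [norm_smul, hU]
  have hscale := hB.smul_smul x ‖U‖ 1 ((‖U‖ : ℂ)⁻¹ • U) (Φ x)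
  rw [smul_inv_smul₀ (by simpa using hU), one_smul, mul_one] at hscale
  rw [hscale, norm_mul, mul_comm C]
  simpa using mul_le_mul_of_nonneg_left (hC (x, _) ⟨hx, by simpa using hunit⟩) (norm_nonneg U)

lemma W11loc.integrableOn_jet {w : Form n} {Dw : Fin n → Form n} (hw : W11loc w Dw)
    {K : Set (Pt n)} (hK : IsCompact K) : IntegrableOn (jet w Dw) K :=
  .prodMk (.of_eval fun S => (hw.locallyIntegrable S).integrableOn_isCompact hK) <|
    .of_eval fun j => .of_eval fun S => (hw.locallyIntegrable_deriv j S).integrableOn_isCompact hK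

lemma TestForm.continuous_jet {φ : Form n} (hφ : TestForm φ) : Continuous (jet φ (Dcl φ)) :=
  (continuous_pi fun S => (hφ S).1.continuous).prodMk <|
    continuous_pi fun j => continuous_pi fun S => ((hφ S).pd j).1.continuous

lemma TestForm.hasCompactSupport_jet {φ : Form n} (hφ : TestForm φ) :
    HasCompactSupport (jet φ (Dcl φ)) := by
  refine .intro ((isCompact_iUnion fun S => (hφ S).2.isCompact).union
    (isCompact_iUnion fun j => isCompact_iUnion fun S => ((hφ S).pd j).2.isCompact))
    fun x hx => ?_
  simp only [Set.mem_union, Set.mem_iUnion, not_or, not_exists] at hx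
  have hφ_zero : φ x = 0 := funext fun S =>
    image_eq_zero_of_notMem_tsupport (f := fun y => φ y S) (hx.1 S)
  have hDφ_zero : (fun j => Dcl φ j x) = 0 := funext fun j => funext fun S =>
    image_eq_zero_of_notMem_tsupport (f := pd j fun y => φ y S) (hx.2 j S)
  exact Prod.ext hφ_zero hDφ_zero

lemma JetPairing.integrable {B : Pt n → Jet n → Jet n → ℂ} (hB : JetPairing B) {w φ : Form n}
    {Dw : Fin n → Form n} (hw : W11loc w Dw) (hφ : TestForm φ) :
    Integrable fun x => B x (jet w Dw x) (jet φ (Dcl φ) x) := by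
  have hK := hφ.hasCompactSupport_jet.isCompact
  have hsupp : (Function.support fun x => B x (jet w Dw x) (jet φ (Dcl φ) x))
      ⊆ tsupport (jet φ (Dcl φ)) := fun x hx => by
    by_contra hxK
    have hzero := hB.smul_smul x 1 0 (jet w Dw x) 0
    simp only [one_smul, zero_smul, mul_zero, zero_mul] at hzero
    simp [image_eq_zero_of_notMem_tsupport hxK, hzero] at hx
  obtain ⟨C, hC⟩ := hB.exists_norm_le hφ.continuous_jet hK
  have hw_jet := hw.integrableOn_jet hK
  rw [← integrableOn_iff_integrable_of_support_subset hsupp]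
  refine (hw_jet.norm.const_mul C).mono'
    (hB.continuous.comp_aestronglyMeasurable (aestronglyMeasurable_id.prodMk
      (hw_jet.1.prodMk hφ.continuous_jet.aestronglyMeasurable))) ?_
  filter_upwards [ae_restrict_mem hK.measurableSet] with x hx using hC x hx _

lemma continuous_differential {a : Pt n → ℂ} (ha : ContDiff ℝ 1 a) :
    Continuous fun x => fun j => pd j a x :=
  continuous_pi fun j => continuous_pd ha j

lemma jetPairing_ginner {c : Pt n → ℂ} (hc : Continuous c) :
    JetPairing (n := n) fun x U V => c x * ginner U.1 V.1 :=
  ⟨by fun_prop, fun x s t U V => by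
    simp only [Prod.smul_fst, ginner_smul_left, ginner_smul_right]
    ring⟩

section

variable {α β : Pt 3 → Fin 3 → ℂ}

lemma jetPairing_scalarPair (hα : Continuous α) (hβ : Continuous β) :
    JetPairing fun x U V => scalarPair (α x) (β x) U.1 V.1 U.2 V.2 := by
  refine ⟨by unfold scalarPair; fun_prop, fun x c d U V => ?_⟩
  simp only [scalarPair, Prod.smul_fst, Prod.smul_snd, Pi.smul_apply, proj_smul, ← smul_add,
    ← smul_sub, ginner_smul_left, ginner_smul_right, mul_add, mul_sum]
  congr 1 <;> exact sum_congr rfl fun j _ => by ring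

lemma dstarPair_smul (c u v : Fin 3 → ℂ) (du dv : Fin 3 → Fin 3 → ℂ) (s t : ℂ) :
    dstarPair c (s • u) (t • v) (s • du) (t • dv) = s * t * dstarPair c u v du dv := by
  simp only [dstarPair, Pi.smul_apply, smul_eq_mul, Fin.sum_univ_three]
  ring

lemma jetPairing_dstarPair (hβ : Continuous β) :
    JetPairing fun x U V => dstarPair (β x) (fun j => U.1 {j}) (fun j => V.1 {j})
      (fun j k => U.2 j {k}) fun j k => V.2 j {k} :=
  ⟨by fun_prop, fun x c d U V => dstarPair_smul (β x) (fun j => U.1 {j}) (fun j => V.1 {j})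
    (fun j k => U.2 j {k}) (fun j k => V.2 j {k}) c d⟩

lemma jetPairing_dstarPair_star2 (hα : Continuous α) :
    JetPairing fun x U V => dstarPair (α x) (star2 U.1) (star2 V.1)
      (fun j k => star2 (U.2 j) k) fun j k => star2 (V.2 j) k := by
  refine ⟨by fun_prop, fun x c d U V => ?_⟩
  simp only [Prod.smul_fst, Prod.smul_snd, Pi.smul_apply, star2_smul]
  exact dstarPair_smul _ _ _ (fun j => star2 (U.2 j)) (fun j => star2 (V.2 j)) c d

end

lemma W11loc.w11c_symWedgeBot {w φ : Form n} {Dw : Fin n → Form n} (hw : W11loc w Dw)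
    (hφ : TestForm φ) (S : Finset (Fin n)) :
    W11c (fun x => symWedgeBot (w x) (φ x) S)
      fun j x => (symWedgeBot (Dw j x) (φ x) + symWedgeBot (w x) (Dcl φ j x)) S := by
  convert (hw.w11c_mul (hφ S) ∅).add (hw.w11c_mul (hφ ∅) S) using 3
  · rfl
  · simp only [symWedgeBot, Pi.add_apply, Dcl]
    ring

lemma W11loc.w11c_symVeeTop {w φ : Form n} {Dw : Fin n → Form n} (hw : W11loc w Dw)
    (hφ : TestForm φ) (S : Finset (Fin n)) :
    W11c (fun x => symVeeTop (w x) (φ x) S)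
      fun j x => (symVeeTop (Dw j x) (φ x) + symVeeTop (w x) (Dcl φ j x)) S := by
  convert ((hw.w11c_mul (hφ univ) Sᶜ).add (hw.w11c_mul (hφ Sᶜ) univ)).const_mul (msgn S Sᶜ)
    using 3
  · rfl
  · simp only [symVeeTop, Pi.add_apply, Dcl]
    ring

lemma W11loc.integral_cross_first_order {w φ : Form 3} {Dw : Fin 3 → Form 3}
    (hw : W11loc w Dw) (hφ : TestForm φ) {a b : Pt 3 → ℂ} (ha : ContDiff ℝ 1 a)
    (hb : ContDiff ℝ 1 b) :
    ∫ x, -(ginner (dirac fun j => altSign (Dw j x))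
            (P0t (oneG fun j => pd j a x) (oneG fun j => pd j b x) 0 (φ x))
          + ginner (P0t (oneG fun j => pd j a x) (oneG fun j => pd j b x) 0 (w x))
            (dirac fun j => altSign (Dcl φ j x)))
      = (∫ x, scalarPair (fun j => pd j a x) (fun j => pd j b x) (w x) (φ x) (fun j => Dw j x)
            fun j => Dcl φ j x)
        + (∫ x, dstarPair (fun k => pd k b x) (fun j => w x {j}) (fun j => φ x {j})
            (fun j k => Dw j x {k}) fun j k => Dcl φ j x {k})
        + ∫ x, dstarPair (fun k => pd k a x) (star2 (w x)) (star2 (φ x))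
            (fun j k => star2 (Dw j x) k) fun j k => star2 (Dcl φ j x) k := by
  have hda := continuous_differential ha
  have hdb := continuous_differential hb
  have hscalar := (jetPairing_scalarPair hda hdb).integrable hw hφ
  have hone := (jetPairing_dstarPair hdb).integrable hw hφ
  have htwo := (jetPairing_dstarPair_star2 hda).integrable hw hφ
  have hbot := integral_ginner_differential_gdel ha (hw.w11c_symWedgeBot hφ)
  have htop := integral_ginner_differential_gdel hb (hw.w11c_symVeeTop hφ)
  have hbot_int := integrable_ginner_oneG_gdel hda (hw.w11c_symWedgeBot hφ)
  have htop_int := integrable_ginner_oneG_gdel hdb (hw.w11c_symVeeTop hφ)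
  simp only [neg_ginner_dirac_P0t_add]
  refine (integral_add (((hscalar.add hone).add htwo).sub hbot_int) htop_int).trans ?_
  rw [htop, add_zero, integral_sub' ((hscalar.add hone).add htwo) hbot_int, hbot, sub_zero,
    integral_add' (hscalar.add hone) htwo, integral_add' hscalar hone]
  rfl

lemma W11loc.integral_ginner_dirac_altSign {w φ : Form n} {Dw : Fin n → Form n}
    (hw : W11loc w Dw) (hφ : TestForm φ) {c : Pt n → ℂ} (hc : ContDiff ℝ 1 c) :
    Integrable (fun x => c x * (ginner (dirac fun j => altSign (Dw j x)) (φ x)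
          + ginner (w x) (dirac fun j => altSign (Dcl φ j x)))
        + ginner (w x) (dirac fun j => pd j c x • altSign (φ x))) ∧
      ∫ x, (c x * (ginner (dirac fun j => altSign (Dw j x)) (φ x)
          + ginner (w x) (dirac fun j => altSign (Dcl φ j x)))
        + ginner (w x) (dirac fun j => pd j c x • altSign (φ x))) = 0 := by
  have hparts := hw.integratesByParts hφ.altSign_comp hc
  have hsplit : ∀ x, c x * (ginner (dirac fun j => altSign (Dw j x)) (φ x)
        + ginner (w x) (dirac fun j => altSign (Dcl φ j x)))
        + ginner (w x) (dirac fun j => pd j c x • altSign (φ x))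
      = ginner (w x) (dirac fun j => c x • Dcl (fun y => altSign (φ y)) j x
            + pd j c x • altSign (φ x))
        - ginner (dirac fun j => Dw j x) (c x • altSign (φ x)) := fun x => by
    simp only [hφ.Dcl_altSign, dirac_add, dirac_smul, ginner_add_right, ginner_smul_right,
      ← ginner_altSign_left, dirac_altSign (fun j => Dw j x), ginner_neg_left]
    ring
  have hright : Integrable fun x => ginner (w x) (dirac fun j =>
      c x • Dcl (fun y => altSign (φ y)) j x + pd j c x • altSign (φ x)) := by
    simpa only [ginner_comm] using hparts.symm.integrable_ginner_dirac_left
  have hleft := hparts.integrable_ginner_dirac_left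
  simp only [hsplit]
  exact ⟨hright.sub hleft, by
    rw [integral_sub hright hleft, hparts.integral_ginner_dirac, sub_self]⟩

lemma jetPairing_cross_zeroth {α β : Pt 3 → Fin 3 → ℂ} {c : Pt 3 → ℂ} (hα : Continuous α)
    (hβ : Continuous β) (hc : Continuous c) :
    JetPairing fun x U V =>
      c x * (ginner (P0t (oneG (α x)) (oneG (β x)) 0 U.1) V.1
        + ginner U.1 (P0t (oneG (α x)) (oneG (β x)) 0 V.1))
      - c x * (ginner (dirac fun j => altSign (U.2 j)) V.1
        + ginner U.1 (dirac fun j => altSign (V.2 j))) :=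
  ⟨by fun_prop, fun x s t U V => by
    simp only [Prod.smul_fst, Prod.smul_snd, Pi.smul_apply, altSign_smul, dirac_smul, P0t_smul,
      ginner_smul_left, ginner_smul_right]
    ring⟩

lemma W11loc.integral_cross_zeroth_order {w φ : Form 3} {Dw : Fin 3 → Form 3}
    (hw : W11loc w Dw) (hφ : TestForm φ) {a b c : Pt 3 → ℂ} (ha : ContDiff ℝ 1 a)
    (hb : ContDiff ℝ 1 b) (hc : ContDiff ℝ 1 c)
    (hpd : ∀ j x, pd j c x = c x * (pd j a x + pd j b x)) :
    ∫ x, (c x * (ginner (P0t (oneG fun j => pd j a x) (oneG fun j => pd j b x) 0 (w x)) (φ x)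
          + ginner (w x) (P0t (oneG fun j => pd j a x) (oneG fun j => pd j b x) 0 (φ x)))
        - c x * (ginner (dirac fun j => altSign (Dw j x)) (φ x)
          + ginner (w x) (dirac fun j => altSign (Dcl φ j x))))
      = ∫ x, 2 * ginner (vee (oneG fun j => pd j c x) (proj 1 (w x) + proj 3 (w x))
          + wedge (oneG fun j => pd j c x) (proj 0 (w x) + proj 2 (w x))) (φ x) := by
  have hcross := (jetPairing_cross_zeroth (continuous_differential ha)
    (continuous_differential hb) hc.continuous).integrable hw hφ
  obtain ⟨hint, hzero⟩ := hw.integral_ginner_dirac_altSign hφ hc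
  have hsum := integral_add hcross hint
  rw [hzero, add_zero] at hsum
  refine hsum.symm.trans (integral_congr_ae (ae_of_all _ fun x => ?_))
  have h := ginner_P0t_add_ginner_P0t (c x) (fun j => pd j a x) (fun j => pd j b x) (w x) (φ x)
  simp only [hpd, jet, ← h]
  ring

/-! ### Coefficients and the expansion of the bilinear form -/

lemma pd_const_mul {f : Pt n → ℂ} {x : Pt n} (hf : DifferentiableAt ℝ f x) (k : ℂ) (j : Fin n) :
    pd j (fun y => k * f y) x = k * pd j f x := by
  simp [pd, fderiv_const_mul hf]

lemma pd_cexp {f : Pt n → ℂ} {x : Pt n} (hf : DifferentiableAt ℝ f x) (j : Fin n) :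
    pd j (fun y => Complex.exp (f y)) x = Complex.exp (f x) * pd j f x := by
  simp [pd, hf.hasFDerivAt.cexp.fderiv]

lemma contDiff_clog {f : Pt n → ℂ} (hf : ContDiff ℝ 1 f) (h : ∀ x, f x ∈ Complex.slitPlane) :
    ContDiff ℝ 1 fun x => Complex.log (f x) :=
  contDiff_iff_contDiffAt.2 fun x =>
    ((Complex.contDiffAt_log (h x)).restrict_scalars ℝ).comp x hf.contDiffAt

lemma exp_half_log_sq {z : ℂ} (hz : z ≠ 0) : Complex.exp (1 / 2 * Complex.log z) ^ 2 = z := by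
  rw [← Complex.exp_nat_mul, Nat.cast_ofNat, ← mul_assoc, mul_one_div_cancel two_ne_zero, one_mul,
    Complex.exp_log hz]

namespace Coeffs

variable (C : Coeffs)

lemma γ_mem_slitPlane (x : Pt 3) : C.γ x ∈ Complex.slitPlane := by
  refine .inl ?_
  have hre : (C.γ x).re = C.εf x := by
    simp [γ, mul_div_right_comm, ← Complex.ofReal_div, mul_comm Complex.I]
  exact hre ▸ C.hε₀.trans_le (C.hεge x)

lemma μ_mem_slitPlane (x : Pt 3) : (C.μf x : ℂ) ∈ Complex.slitPlane :=
  Complex.ofReal_mem_slitPlane.2 (C.hμ₀.trans_le (C.hμge x))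

lemma contDiff_a : ContDiff ℝ 1 C.a := by
  have hε := Complex.ofRealCLM.contDiff.comp C.hεC1
  have hσ := Complex.ofRealCLM.contDiff.comp C.hσC1
  exact contDiff_const.mul <|
    contDiff_clog (hε.add ((contDiff_const.mul hσ).div_const _)) C.γ_mem_slitPlane

lemma contDiff_b : ContDiff ℝ 1 C.b :=
  contDiff_const.mul <|
    contDiff_clog (Complex.ofRealCLM.contDiff.comp C.hμC1) C.μ_mem_slitPlane

lemma differentiable_a : Differentiable ℝ C.a := C.contDiff_a.differentiable one_ne_zero

lemma differentiable_b : Differentiable ℝ C.b := C.contDiff_b.differentiable one_ne_zero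

lemma c0_eq : C.c0 = fun x => Complex.I * C.ω * (C.sg x * C.sm x) := by
  funext x
  simp only [c0, mul_assoc]

lemma contDiff_c0 : ContDiff ℝ 1 C.c0 := by
  rw [c0_eq]
  exact contDiff_const.mul (C.contDiff_a.cexp.mul C.contDiff_b.cexp)

lemma c0_sq (x : Pt 3) : C.c0 x ^ 2 = -((C.ω : ℂ) ^ 2 * (C.γ x * C.μf x)) := by
  have hγ : C.sg x ^ 2 = C.γ x :=
    exp_half_log_sq (Complex.slitPlane_ne_zero (C.γ_mem_slitPlane x))
  have hμ : C.sm x ^ 2 = C.μf x :=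
    exp_half_log_sq (Complex.slitPlane_ne_zero (C.μ_mem_slitPlane x))
  rw [c0, ← hγ, ← hμ]
  linear_combination (C.ω : ℂ) ^ 2 * C.sg x ^ 2 * C.sm x ^ 2 * Complex.I_sq

lemma differentiable_sg : Differentiable ℝ C.sg := C.differentiable_a.cexp

lemma differentiable_sm : Differentiable ℝ C.sm := C.differentiable_b.cexp

lemma pd_c0 (j : Fin 3) (x : Pt 3) :
    pd j C.c0 x = Complex.I * C.ω * pd j (fun y => C.sg y * C.sm y) x := by
  rw [c0_eq]
  exact pd_const_mul ((C.differentiable_sg x).mul (C.differentiable_sm x)) _ j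

lemma pd_c0_eq_mul (j : Fin 3) (x : Pt 3) :
    pd j C.c0 x = C.c0 x * (pd j C.a x + pd j C.b x) := by
  have hsg : pd j C.sg x = C.sg x * pd j C.a x := pd_cexp (C.differentiable_a x) j
  have hsm : pd j C.sm x = C.sm x * pd j C.b x := pd_cexp (C.differentiable_b x) j
  rw [pd_c0, pd_mul (C.differentiable_sg x) (C.differentiable_sm x), hsg, hsm, c0]
  ring

lemma oneG_pd_c0 (x : Pt 3) :
    (oneG fun j => pd j C.c0 x) = (Complex.I * C.ω) • C.dsgm x := by
  funext S
  simp only [dsgm, pd_c0, oneG, Pi.smul_apply, smul_eq_mul, mul_sum, mul_ite, mul_zero]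

end Coeffs

lemma ginner_Ptfull_Ptfull (A B : GF 3) (c : ℂ) (D E : Fin 3 → GF 3) (u v : GF 3) :
    ginner (Ptfull A B c D u) (Ptfull A B c E v)
      = ginner (dirac D) (dirac E) + ginner (P0t A B 0 u) (P0t A B 0 v) + c ^ 2 * ginner u v
        + -(ginner (dirac fun j => altSign (D j)) (P0t A B 0 v)
          + ginner (P0t A B 0 u) (dirac fun j => altSign (E j)))
        + (c * (ginner (P0t A B 0 u) v + ginner u (P0t A B 0 v))
          - c * (ginner (dirac fun j => altSign (D j)) v
            + ginner u (dirac fun j => altSign (E j)))) := by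
  have hPt : ∀ (D : Fin 3 → GF 3) (v : GF 3),
      Ptfull A B c D v = -(dirac fun j => altSign (D j)) + P0t A B 0 v + c • v := fun D v => by
    simp only [Ptfull, P0t, dirac, zero_smul]
    abel
  simp only [hPt, ← ginner_dirac_altSign D E, ← neg_one_smul ℂ (dirac _), ginner_add_left,
    ginner_add_right, ginner_smul_left, ginner_smul_right]
  ring

lemma jetPairing_ginner_dirac :
    JetPairing (n := n) fun _ U V => ginner (dirac U.2) (dirac V.2) :=
  ⟨by fun_prop, fun _ c d U V => by
    have hU : dirac (c • U).2 = c • dirac U.2 := dirac_smul U.2 c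
    have hV : dirac (d • V).2 = d • dirac V.2 := dirac_smul V.2 d
    rw [hU, hV, ginner_smul_left, ginner_smul_right, mul_assoc]⟩

lemma jetPairing_ginner_P0t {α β : Pt 3 → Fin 3 → ℂ} (hα : Continuous α) (hβ : Continuous β) :
    JetPairing fun x U V =>
      ginner (P0t (oneG (α x)) (oneG (β x)) 0 U.1) (P0t (oneG (α x)) (oneG (β x)) 0 V.1) :=
  ⟨by fun_prop, fun x c d U V => by
    simp only [Prod.smul_fst, P0t_smul, ginner_smul_left, ginner_smul_right]
    ring⟩

lemma jetPairing_cross_first {α β : Pt 3 → Fin 3 → ℂ} (hα : Continuous α) (hβ : Continuous β) :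
    JetPairing fun x U V =>
      -(ginner (dirac fun j => altSign (U.2 j)) (P0t (oneG (α x)) (oneG (β x)) 0 V.1)
        + ginner (P0t (oneG (α x)) (oneG (β x)) 0 U.1) (dirac fun j => altSign (V.2 j))) :=
  ⟨by fun_prop, fun x c d U V => by
    simp only [Prod.smul_fst, Prod.smul_snd, Pi.smul_apply, altSign_smul, dirac_smul, P0t_smul,
      ginner_smul_left, ginner_smul_right]
    ring⟩

lemma W11loc.integral_ginner_Ptfull {w φ : Form 3} {Dw : Fin 3 → Form 3} (hw : W11loc w Dw)
    (hφ : TestForm φ) {a b c : Pt 3 → ℂ} (ha : ContDiff ℝ 1 a) (hb : ContDiff ℝ 1 b)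
    (hc : ContDiff ℝ 1 c) (hpd : ∀ j x, pd j c x = c x * (pd j a x + pd j b x)) :
    ∫ x, ginner
        (Ptfull (oneG fun j => pd j a x) (oneG fun j => pd j b x) (c x) (fun j => Dw j x) (w x))
        (Ptfull (oneG fun j => pd j a x) (oneG fun j => pd j b x) (c x) (fun j => Dcl φ j x)
          (φ x))
      = (∫ x, (ginner (gdel fun j => Dw j x) (gdel fun j => Dcl φ j x)
            + ginner (gd fun j => Dw j x) (gd fun j => Dcl φ j x)))
        + (∫ x, (ginner (oneG fun j => pd j a x) (oneG fun j => pd j a x)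
              * ginner (proj 0 (w x) + proj 2 (w x)) (proj 0 (φ x) + proj 2 (φ x))
            + ginner (oneG fun j => pd j b x) (oneG fun j => pd j b x)
              * ginner (proj 1 (w x) + proj 3 (w x)) (proj 1 (φ x) + proj 3 (φ x))))
        + (∫ x, c x ^ 2 * ginner (w x) (φ x))
        + ((∫ x, scalarPair (fun j => pd j a x) (fun j => pd j b x) (w x) (φ x)
              (fun j => Dw j x) fun j => Dcl φ j x)
          + (∫ x, dstarPair (fun k => pd k b x) (fun j => w x {j}) (fun j => φ x {j})
              (fun j k => Dw j x {k}) fun j k => Dcl φ j x {k})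
          + ∫ x, dstarPair (fun k => pd k a x) (star2 (w x)) (star2 (φ x))
              (fun j k => star2 (Dw j x) k) fun j k => star2 (Dcl φ j x) k)
        + ∫ x, 2 * ginner (vee (oneG fun j => pd j c x) (proj 1 (w x) + proj 3 (w x))
            + wedge (oneG fun j => pd j c x) (proj 0 (w x) + proj 2 (w x))) (φ x) := by
  have hda := continuous_differential ha
  have hdb := continuous_differential hb
  have hsecond := jetPairing_ginner_dirac.integrable hw hφ
  have hsquare := (jetPairing_ginner_P0t hda hdb).integrable hw hφ
  have hscalar := (jetPairing_ginner (hc.continuous.pow 2)).integrable hw hφ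
  have hfirst := (jetPairing_cross_first hda hdb).integrable hw hφ
  have hzeroth := (jetPairing_cross_zeroth hda hdb hc.continuous).integrable hw hφ
  rw [← hw.integral_cross_zeroth_order hφ ha hb hc hpd, ← hw.integral_cross_first_order hφ ha hb,
    ← hw.integral_ginner_dirac hφ]
  simp only [ginner_Ptfull_Ptfull, ← ginner_P0t_P0t]
  refine (integral_add (((hsecond.add hsquare).add hscalar).add hfirst) hzeroth).trans ?_
  rw [integral_add' ((hsecond.add hsquare).add hscalar) hfirst,
    integral_add' (hsecond.add hsquare) hscalar, integral_add' hsecond hsquare]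
  rfl

lemma W11loc.integrable_ginner_gdel_add_ginner_gd {w φ : Form n} {Dw : Fin n → Form n}
    (hw : W11loc w Dw) (hφ : TestForm φ) :
    Integrable fun x => ginner (gdel fun j => Dw j x) (gdel fun j => Dcl φ j x)
      + ginner (gd fun j => Dw j x) (gd fun j => Dcl φ j x) := by
  refine JetPairing.integrable (B := fun _ U V => ginner (gdel U.2) (gdel V.2)
    + ginner (gd U.2) (gd V.2)) ⟨by fun_prop, fun _ c d U V => ?_⟩ hw hφ
  have hdelU : gdel (c • U).2 = c • gdel U.2 := gdel_smul U.2 c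
  have hdelV : gdel (d • V).2 = d • gdel V.2 := gdel_smul V.2 d
  have hdU : gd (c • U).2 = c • gd U.2 := gd_smul U.2 c
  have hdV : gd (d • V).2 = d • gd V.2 := gd_smul V.2 d
  simp only [hdelU, hdelV, hdU, hdV, ginner_smul_left, ginner_smul_right]
  ring

lemma W11loc.integral_ginner_gdel_add_ginner_gd_sub {w φ : Form n} {Dw : Fin n → Form n}
    (hw : W11loc w Dw) (hφ : TestForm φ) (k : ℂ) :
    ∫ x, (ginner (gdel fun j => Dw j x) (gdel fun j => Dcl φ j x)
        + ginner (gd fun j => Dw j x) (gd fun j => Dcl φ j x) - k * ginner (w x) (φ x))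
      = (∫ x, (ginner (gdel fun j => Dw j x) (gdel fun j => Dcl φ j x)
        + ginner (gd fun j => Dw j x) (gd fun j => Dcl φ j x))) - ∫ x, k * ginner (w x) (φ x) :=
  integral_sub (hw.integrable_ginner_gdel_add_ginner_gd hφ)
    ((jetPairing_ginner continuous_const).integrable hw hφ)

namespace Coeffs

variable (C : Coeffs)

lemma integral_c0_sq_mul_ginner {w φ : Form 3} {Dw : Fin 3 → Form 3} (hw : W11loc w Dw)
    (hφ : TestForm φ) :
    ∫ x, C.c0 x ^ 2 * ginner (w x) (φ x)
      = -(∫ x, (C.ω : ℂ) ^ 2 * ((C.ε₀ * C.μ₀ : ℝ) : ℂ) * ginner (w x) (φ x))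
        - ∫ x, (C.ω : ℂ) ^ 2 * (C.γ x * (C.μf x : ℂ) - ((C.ε₀ * C.μ₀ : ℝ) : ℂ))
          * ginner (w x) (φ x) := by
  have hsplit : ∀ x, (C.ω : ℂ) ^ 2 * (C.γ x * (C.μf x : ℂ) - ((C.ε₀ * C.μ₀ : ℝ) : ℂ))
      * ginner (w x) (φ x) = -(C.c0 x ^ 2 * ginner (w x) (φ x))
        - (C.ω : ℂ) ^ 2 * ((C.ε₀ * C.μ₀ : ℝ) : ℂ) * ginner (w x) (φ x) := fun x => by
    rw [C.c0_sq]
    ring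
  have hc0 := (jetPairing_ginner (C.contDiff_c0.continuous.pow 2)).integrable hw hφ
  have hconst := (jetPairing_ginner (continuous_const
    (y := (C.ω : ℂ) ^ 2 * ((C.ε₀ * C.μ₀ : ℝ) : ℂ)))).integrable hw hφ
  have hsub := integral_sub hc0.neg hconst
  simp only [hsplit]
  simp only [jet, Pi.neg_apply, Pi.pow_apply, integral_neg] at hsub
  rw [hsub]
  ring

lemma two_mul_ginner_differential_c0 (x : Pt 3) (u v : GF 3) :
    2 * ginner (vee (oneG fun j => pd j C.c0 x) (proj 1 u + proj 3 u)
        + wedge (oneG fun j => pd j C.c0 x) (proj 0 u + proj 2 u)) v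
      = ginner ((2 * Complex.I * (C.ω : ℂ)) • (vee (C.dsgm x) (proj 1 u + proj 3 u)
          + wedge (C.dsgm x) (proj 0 u + proj 2 u))) v := by
  simp only [C.oneG_pd_c0, wedge_smul_left, vee_smul_left, ← smul_add, ginner_smul_left]
  ring

end Coeffs

theorem statement4_general (C : Coeffs) (w : Form 3) (Dw : Fin 3 → Form 3)
    (hw : W11loc w Dw) (φ : Form 3) (hφ : TestForm φ) :
    (∫ x, ginner (Ptfull (C.da x) (C.db x) (C.c0 x) (fun j => Dw j x) (w x))
        (Ptfull (C.da x) (C.db x) (C.c0 x) (fun j => Dcl φ j x) (φ x)))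
      = (∫ x, ginner (gdel fun j => Dw j x) (gdel fun j => Dcl φ j x)
          + ginner (gd fun j => Dw j x) (gd fun j => Dcl φ j x)
          - (C.ω : ℂ) ^ 2 * ((C.ε₀ * C.μ₀ : ℝ) : ℂ) * ginner (w x) (φ x))
        + Qpair C w Dw φ := by
  have hexpand := hw.integral_ginner_Ptfull hφ C.contDiff_a C.contDiff_b C.contDiff_c0
    C.pd_c0_eq_mul
  rw [C.integral_c0_sq_mul_ginner hw hφ] at hexpand
  simp only [C.two_mul_ginner_differential_c0] at hexpand
  refine hexpand.trans ?_
  rw [hw.integral_ginner_gdel_add_ginner_gd_sub hφ]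
  simp only [Qpair, Coeffs.da, Coeffs.db, scalarPair]
  ring

/-- identity (2.8).  For a graded form `w` with components in
`H¹_loc(ℝ³)` and a smooth compactly supported graded form `φ`,
`∫⟨P(γ,μ,ω)^t w, P(γ,μ,ω)^t φ⟩ dx
  = ∫ [⟨δw,δφ⟩ + ⟨dw,dφ⟩ − ω²ε₀μ₀⟨w,φ⟩] dx + ⟨Q(γ,μ,ω)w, φ⟩`. -/
theorem statement4 (C : Coeffs) (w : Form 3) (Dw : Fin 3 → Form 3)
    (hw : H1locWith w Dw) (φ : Form 3) (hφ : TestForm φ) :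
    (∫ x, ginner (Ptfull (C.da x) (C.db x) (C.c0 x) (fun j => Dw j x) (w x))
        (Ptfull (C.da x) (C.db x) (C.c0 x) (fun j => Dcl φ j x) (φ x)))
      = (∫ x, ginner (gdel fun j => Dw j x) (gdel fun j => Dcl φ j x)
          + ginner (gd fun j => Dw j x) (gd fun j => Dcl φ j x)
          - (C.ω : ℂ) ^ 2 * ((C.ε₀ * C.μ₀ : ℝ) : ℂ) * ginner (w x) (φ x))
        + Qpair C w Dw φ :=
  statement4_general C w Dw hw.w11loc φ hφ

end EMPaper
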